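/- For every irrational α ∈ 𝕋 = ℝ/ℤ, every ε > 0, and every ω ∈ 𝕋, there exists a continuous function f : 𝕋 → ℝ with ‖f‖_∞ < ε such that the discrete Schrödinger operator on ℓ²(ℤ) with potential V(n) = f(ω + nα) has pure point spectrum. -/

import Mathlib

open MeasureTheory

noncomputable section

/-- `ψ ∈ ℓ²(ℤ)` is an eigenfunction of the discrete Schrödinger operator with potential `V`
corresponding to the eigenvalue `E`: `ψ ≠ 0` and `ψ(n+1) + ψ(n-1) + V(n)ψ(n) = Eψ(n)`. -/
def IsEigenfunction (V : ℤ → ℝ) (E : ℝ) (ψ : lp (fun _ : ℤ => ℝ) 2) : Prop :=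
  ψ ≠ 0 ∧ ∀ n : ℤ, (ψ : ∀ _ : ℤ, ℝ) (n + 1) + (ψ : ∀ _ : ℤ, ℝ) (n - 1)
    + V n * (ψ : ∀ _ : ℤ, ℝ) n = E * (ψ : ∀ _ : ℤ, ℝ) n

/-- The discrete Schrödinger operator with potential `V` has pure point spectrum:
its eigenfunctions span a dense subspace of `ℓ²(ℤ)`. -/
def HasPurePointSpectrum (V : ℤ → ℝ) : Prop :=
  (Submodule.span ℝ
    {ψ : lp (fun _ : ℤ => ℝ) 2 | ∃ E : ℝ, IsEigenfunction V E ψ}).topologicalClosure = ⊤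

/-!
The values of `f` on finitely many points of the orbit are free and hardly affect its norm, so `f`
is built as a limit in which longer and longer pieces of the potential are chosen at random and
then frozen. The potential is kept even under the reflection `n ↦ -1 - n`, which splits the operator
into two half-line operators with the boundary conditions `ψ(-1) = ± ψ(0)`, each with a cyclic
vector at the site `0`.

In each step the potential values on a new block are perturbed by independent uniform noise
of a prescribed small size. By the Kunz–Souillard method, averaging over the noise turns transfer
matrices into contractions of `L²` of the projective line, so the averages of the inverse norm of
solutions decay exponentially in the length of the block. Since spectral measures of boxes, averaged
over the last potential value, have the density `‖(ψ(n+1), ψ(n))‖⁻²`, it is therefore possible to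
choose a block for which solutions gain only a summable fraction of their mass on most of the
spectrum, in the mean of a box spectral measure. The fraction is a continuous function of the
energy, and the spectral measure of a longer box has the same moments as that of the half-line
operator up to a large degree, so polynomial approximation transfers the bound to the half-line
spectral measure. By Borel–Cantelli almost every solution is square summable, and an even potential
with this property has a complete set of eigenfunctions.
-/

namespace KunzSouillard

open Finset Polynomial ProbabilityTheory Set
open scoped ENNReal NNReal Topology

/-! ### Averages over one random transfer step -/

lemma inv_le_mul_inv_of_le_mul {a b K : ℝ≥0∞} (hK₀ : K ≠ 0) (hK : K ≠ ∞) (h : a ≤ K * b) :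
    b⁻¹ ≤ K * a⁻¹ := by
  calc b⁻¹ = K * (K * b)⁻¹ := by
        rw [ENNReal.mul_inv (.inl hK₀) (.inl hK), ← mul_assoc, ENNReal.mul_inv_cancel hK₀ hK,
          one_mul]
    _ ≤ K * a⁻¹ := by gcongr

/-- The transfer step `(ψ(n), ψ(n-1)) ↦ (ψ(n+1), ψ(n))` of `ψ(n+1) + ψ(n-1) = bψ(n)`. -/
def transfer (b : ℝ) (x : ℝ × ℝ) : ℝ × ℝ := (b * x.1 - x.2, x.1)

lemma transfer_smul (b d : ℝ) (x : ℝ × ℝ) : transfer b (d • x) = d • transfer b x := by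
  ext
  · simp only [transfer, Prod.smul_fst, Prod.smul_snd, smul_eq_mul]
    ring
  · rfl

lemma transfer_ne_zero (b : ℝ) {x : ℝ × ℝ} (hx : x ≠ 0) : transfer b x ≠ 0 := by
  contrapose! hx
  have h₁ : x.1 = 0 := congrArg Prod.snd hx
  have h₂ : b * x.1 - x.2 = 0 := congrArg Prod.fst hx
  ext
  · exact h₁
  · simpa [h₁] using h₂

lemma norm_le_mul_norm_transfer {b B : ℝ} (hb : |b| ≤ B) (x : ℝ × ℝ) :
    ‖x‖ ≤ (B + 1) * ‖transfer b x‖ := by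
  have hB : 0 ≤ B := (abs_nonneg b).trans hb
  have h₁ : |x.1| ≤ ‖transfer b x‖ := norm_snd_le (transfer b x)
  have h₂ : |b * x.1 - x.2| ≤ ‖transfer b x‖ := norm_fst_le (transfer b x)
  refine max_le ?_ ?_
  · nlinarith [Real.norm_eq_abs x.1, norm_nonneg (transfer b x)]
  · calc |x.2| = |b * x.1 - (b * x.1 - x.2)| := by ring_nf
      _ ≤ |b| * |x.1| + |b * x.1 - x.2| := by rw [← abs_mul]; exact abs_sub _ _
      _ ≤ B * ‖transfer b x‖ + ‖transfer b x‖ := by gcongr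
      _ = (B + 1) * ‖transfer b x‖ := by ring

lemma norm_le_mul_abs_transfer_fst {B : ℝ} {x : ℝ × ℝ} (hx : (B + 1) * |x.1| < ‖x‖) {b : ℝ}
    (hb : |b| ≤ B) : ‖x‖ ≤ (B + 1) * |(transfer b x).1| := by
  have hB : 0 ≤ B := (abs_nonneg b).trans hb
  have hx₂ : ‖x‖ = |x.2| := by
    have hmax : ‖x‖ = |x.1| ∨ ‖x‖ = |x.2| := max_choice _ _
    refine hmax.resolve_left fun h => hx.not_ge ?_
    nlinarith [abs_nonneg x.1]
  have hsub : |x.2| ≤ B * |x.1| + |(transfer b x).1| := by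
    calc |x.2| = |b * x.1 - (b * x.1 - x.2)| := by ring_nf
      _ ≤ |b| * |x.1| + |b * x.1 - x.2| := by rw [← abs_mul]; exact abs_sub _ _
      _ ≤ B * |x.1| + |(transfer b x).1| :=
        add_le_add (by gcongr) le_rfl
  nlinarith

/-- The uniform probability distribution on `[c - ε, c + ε]`. -/
def unif (c ε : ℝ) : Measure ℝ := volume[|Icc (c - ε) (c + ε)]

instance (c ε : ℝ) : IsZeroOrProbabilityMeasure (unif c ε) := by unfold unif; infer_instance

lemma volume_Icc_sub_add (c ε : ℝ) :
    volume (Icc (c - ε) (c + ε)) = ENNReal.ofReal (2 * ε) := by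
  rw [Real.volume_Icc]
  ring_nf

lemma isProbabilityMeasure_unif (c : ℝ) {ε : ℝ} (hε : 0 < ε) :
    IsProbabilityMeasure (unif c ε) :=
  cond_isProbabilityMeasure_of_finite (by simpa [volume_Icc_sub_add] using hε) (by simp)

lemma ae_unif_mem (c ε : ℝ) : ∀ᵐ a ∂unif c ε, a ∈ Icc (c - ε) (c + ε) :=
  ae_cond_mem measurableSet_Icc

lemma lintegral_unif (c ε : ℝ) (g : ℝ → ℝ≥0∞) :
    ∫⁻ a, g a ∂unif c ε = (ENNReal.ofReal (2 * ε))⁻¹ * ∫⁻ a in Icc (c - ε) (c + ε), g a := by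
  rw [unif, ProbabilityTheory.cond, lintegral_smul_measure, volume_Icc_sub_add, smul_eq_mul]

lemma abs_sub_le_of_mem_Icc {E c ε B a : ℝ} (hE : |E - c| + ε ≤ B)
    (ha : a ∈ Icc (c - ε) (c + ε)) : |E - a| ≤ B := by
  have hca : |c - a| ≤ ε := by rw [abs_le]; constructor <;> linarith [ha.1, ha.2]
  linarith [abs_sub_le E c a]

/-- The average of `h` over one transfer step at energy `E`, the potential value being uniformly
distributed on `[c - ε, c + ε]`. -/
def avgStep (E ε c : ℝ) (h : ℝ × ℝ → ℝ≥0∞) (x : ℝ × ℝ) : ℝ≥0∞ :=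
  ∫⁻ a, h (transfer (E - a) x) ∂unif c ε

/-- Homogeneity of degree `-k` under nonzero scalars. -/
def HomNeg (k : ℕ) (h : ℝ × ℝ → ℝ≥0∞) : Prop :=
  ∀ (d : ℝ) (x : ℝ × ℝ), d ≠ 0 → h (d • x) = ‖d‖ₑ⁻¹ ^ k * h x

/-- The integral of `h` over the projective line in the affine chart `t ↦ [t : 1]`; it is the
natural integral on functions homogeneous of degree `-2`. -/
def mass (h : ℝ × ℝ → ℝ≥0∞) : ℝ≥0∞ := ∫⁻ t, h (t, 1)

section Averages

variable {E ε c : ℝ} {h f : ℝ × ℝ → ℝ≥0∞}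

lemma measurable_transfer_sub (E : ℝ) :
    Measurable fun p : (ℝ × ℝ) × ℝ => transfer (E - p.2) p.1 := by
  unfold transfer
  fun_prop

lemma measurable_comp_transfer_sub (hh : Measurable h) (E : ℝ) (x : ℝ × ℝ) :
    Measurable fun a : ℝ => h (transfer (E - a) x) :=
  hh.comp ((measurable_transfer_sub E).comp measurable_prodMk_left)

lemma measurable_avgStep (hh : Measurable h) : Measurable (avgStep E ε c h) :=
  (hh.comp (measurable_transfer_sub E)).lintegral_prod_right'

lemma avgStep_mono {h₁ h₂ : ℝ × ℝ → ℝ≥0∞} (hle : h₁ ≤ h₂) :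
    avgStep E ε c h₁ ≤ avgStep E ε c h₂ :=
  fun _ => lintegral_mono fun _ => hle _

lemma avgStep_le_of_forall_le (hε : 0 < ε) {B : ℝ} (hE : |E - c| + ε ≤ B) {x : ℝ × ℝ}
    {M : ℝ≥0∞} (hM : ∀ b, |b| ≤ B → h (transfer b x) ≤ M) : avgStep E ε c h x ≤ M := by
  have := isProbabilityMeasure_unif c hε
  calc avgStep E ε c h x ≤ ∫⁻ _, M ∂unif c ε := by
        refine lintegral_mono_ae ?_
        filter_upwards [ae_unif_mem c ε] with a ha
        exact hM _ (abs_sub_le_of_mem_Icc hE ha)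
    _ = M := by simp

lemma HomNeg.avgStep {k : ℕ} (hk : HomNeg k h) (hh : Measurable h) :
    HomNeg k (avgStep E ε c h) := by
  intro d x hd
  simp only [KunzSouillard.avgStep, transfer_smul, hk d _ hd]
  exact lintegral_const_mul _ (measurable_comp_transfer_sub hh E x)

lemma HomNeg.sq (hf : HomNeg 1 f) : HomNeg 2 (f ^ 2) := by
  intro d x hd
  simp only [Pi.pow_apply, hf d x hd, mul_pow, pow_one]

lemma homNeg_inv_enorm : HomNeg 1 fun x => ‖x‖ₑ⁻¹ := by
  intro d x hd
  simp only [pow_one]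
  rw [enorm_smul, ENNReal.mul_inv (.inl (by simpa using hd)) (.inl enorm_ne_top)]

lemma HomNeg.apply_of_ne {k : ℕ} (hk : HomNeg k h) (x : ℝ) {y : ℝ} (hy : y ≠ 0) :
    h (x, y) = ‖y‖ₑ⁻¹ ^ k * h (x / y, 1) := by
  rw [← hk y _ hy]
  congr 2
  · simp only [smul_eq_mul]
    field_simp
  · simp

lemma lintegral_sub_inv (b : ℝ) {S : Set ℝ} (hS : MeasurableSet S) (hS0 : 0 ∉ S)
    (g : ℝ → ℝ≥0∞) :
    ∫⁻ t in S, ‖t‖ₑ⁻¹ ^ 2 * g (b - t⁻¹) = ∫⁻ s in (fun t => b - t⁻¹) '' S, g s := by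
  have hne : ∀ t ∈ S, t ≠ 0 := fun t ht h0 => hS0 (h0 ▸ ht)
  rw [lintegral_image_eq_lintegral_abs_deriv_mul (f' := fun t => (t ^ 2)⁻¹) hS]
  · refine setLIntegral_congr_fun hS fun t ht => ?_
    simp only [abs_inv, abs_pow]
    rw [ENNReal.ofReal_inv_of_pos (by have := hne t ht; positivity),
      ENNReal.ofReal_pow (abs_nonneg t), ← Real.enorm_eq_ofReal_abs, ENNReal.inv_pow]
  · intro t ht
    simpa using ((hasDerivAt_inv (hne t ht)).const_sub b).hasDerivWithinAt
  · intro t _ u _ htu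
    simpa using htu

lemma image_sub_inv_compl_zero (b : ℝ) : (fun t : ℝ => b - t⁻¹) '' {0}ᶜ = {b}ᶜ := by
  ext s
  simp only [Set.mem_image, Set.mem_compl_iff, Set.mem_singleton_iff]
  constructor
  · rintro ⟨t, ht, rfl⟩ hb
    exact ht (inv_eq_zero.1 (by linarith))
  · intro hs
    exact ⟨(b - s)⁻¹, inv_ne_zero fun h0 => hs (by linarith), by simp⟩

lemma lintegral_sub_inv_univ (b : ℝ) (g : ℝ → ℝ≥0∞) :
    ∫⁻ t, ‖t‖ₑ⁻¹ ^ 2 * g (b - t⁻¹) = ∫⁻ s, g s := by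
  have hsub := lintegral_sub_inv b (measurableSet_singleton (0 : ℝ)).compl (by simp) g
  rw [image_sub_inv_compl_zero] at hsub
  simpa only [restrict_compl_singleton] using hsub

lemma mass_comp_transfer (hh : HomNeg 2 h) (b : ℝ) : mass (fun x => h (transfer b x)) = mass h := by
  rw [mass, mass, ← lintegral_sub_inv_univ b fun t => h (t, 1)]
  refine lintegral_congr_ae ?_
  filter_upwards [Measure.ae_ne volume (0 : ℝ)] with t ht
  rw [transfer, hh.apply_of_ne _ ht]
  congr 3
  field_simp

lemma mass_avgStep (hε : 0 < ε) (hh : HomNeg 2 h) (hm : Measurable h) :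
    mass (avgStep E ε c h) = mass h := by
  have := isProbabilityMeasure_unif c hε
  calc mass (avgStep E ε c h) = ∫⁻ a, mass (fun x => h (transfer (E - a) x)) ∂unif c ε := by
        refine lintegral_lintegral_swap (Measurable.aemeasurable ?_)
        exact hm.comp ((measurable_transfer_sub E).comp (by fun_prop :
          Measurable fun p : ℝ × ℝ => ((p.1, (1 : ℝ)), p.2)))
    _ = mass h := by simp [mass_comp_transfer hh]

lemma avgStep_le_mass (hh : HomNeg 2 h) {x : ℝ × ℝ} (hx : x.1 ≠ 0) :
    avgStep E ε c h x ≤ (ENNReal.ofReal (2 * ε))⁻¹ * (‖x.1‖ₑ⁻¹ ^ 2 * mass h) := by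
  have hchart : ∀ a, h (transfer (E - a) x) = ‖x.1‖ₑ⁻¹ ^ 2 * h (E - x.2 / x.1 - a, 1) := by
    intro a
    rw [transfer, hh.apply_of_ne _ hx]
    congr 3
    field_simp
    ring
  rw [avgStep, lintegral_unif]
  gcongr
  calc ∫⁻ a in Icc (c - ε) (c + ε), h (transfer (E - a) x)
      ≤ ∫⁻ a, ‖x.1‖ₑ⁻¹ ^ 2 * h (E - x.2 / x.1 - a, 1) := by
        simp only [← hchart]
        exact setLIntegral_le_lintegral _ _
    _ = ‖x.1‖ₑ⁻¹ ^ 2 * mass h := by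
        rw [lintegral_const_mul' _ _ (by simp [hx]), mass,
          lintegral_sub_left_eq_self fun t => h (t, 1)]

-- One step smooths unless the first coordinate is small, in which case it is no longer small after
-- one more step.
lemma avgStep_avgStep_le_mass {c' B : ℝ} (hε : 0 < ε) (hE : |E - c| + ε ≤ B) (hh : HomNeg 2 h)
    (hm : Measurable h) {x : ℝ × ℝ} (hx : x ≠ 0) :
    avgStep E ε c (avgStep E ε c' h) x ≤ (ENNReal.ofReal (2 * ε))⁻¹ *
      ((ENNReal.ofReal (B + 1) * ‖x‖ₑ⁻¹) ^ 2 * mass h) := by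
  have hB : 0 < B + 1 := by linarith [abs_nonneg (E - c)]
  have hinv : ∀ y : ℝ, ‖x‖ ≤ (B + 1) * |y| →
      y ≠ 0 ∧ ‖y‖ₑ⁻¹ ≤ ENNReal.ofReal (B + 1) * ‖x‖ₑ⁻¹ := by
    intro y hy
    refine ⟨?_, inv_le_mul_inv_of_le_mul (by simpa using hB) (by simp) ?_⟩
    · rintro rfl
      exact hx (norm_le_zero_iff.1 (by simpa using hy))
    · rw [Real.enorm_eq_ofReal_abs, ← ENNReal.ofReal_mul hB.le, ← ofReal_norm]
      exact ENNReal.ofReal_le_ofReal hy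
  rcases le_or_gt ‖x‖ ((B + 1) * |x.1|) with hlarge | hsmall
  · obtain ⟨hx₁, hle⟩ := hinv _ hlarge
    refine (avgStep_le_mass (hh.avgStep hm) hx₁).trans ?_
    rw [mass_avgStep hε hh hm]
    gcongr
  · refine avgStep_le_of_forall_le hε hE fun b hb => ?_
    obtain ⟨hy, hle⟩ := hinv _ (norm_le_mul_abs_transfer_fst hsmall hb)
    refine (avgStep_le_mass hh hy).trans ?_
    gcongr

lemma avgStep_inv_enorm_pow_le {B : ℝ} (hε : 0 < ε) (hE : |E - c| + ε ≤ B) (k : ℕ) (x : ℝ × ℝ) :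
    avgStep E ε c (fun x => ‖x‖ₑ⁻¹ ^ k) x ≤ (ENNReal.ofReal (B + 1) * ‖x‖ₑ⁻¹) ^ k := by
  have hB : 0 < B + 1 := by linarith [abs_nonneg (E - c)]
  refine avgStep_le_of_forall_le hε hE fun b hb => ?_
  gcongr
  refine inv_le_mul_inv_of_le_mul (by simpa using hB) (by simp) ?_
  rw [← ofReal_norm, ← ofReal_norm, ← ENNReal.ofReal_mul hB.le]
  exact ENNReal.ofReal_le_ofReal (norm_le_mul_norm_transfer hb x)

end Averages


/-! ### Contraction of the projective `L²` norm -/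

lemma sq_lintegral_le {X : Type*} [MeasurableSpace X] {ν : Measure X} [IsProbabilityMeasure ν]
    {φ : X → ℝ≥0∞} (hφ : AEMeasurable φ ν) : (∫⁻ a, φ a ∂ν) ^ 2 ≤ ∫⁻ a, φ a ^ 2 ∂ν := by
  have hHölder := ENNReal.lintegral_mul_le_Lp_mul_Lq ν Real.HolderConjugate.two_two hφ
    (aemeasurable_const (b := (1 : ℝ≥0∞)))
  simp only [Pi.mul_apply, mul_one, ENNReal.one_rpow, lintegral_const, measure_univ] at hHölder
  calc (∫⁻ a, φ a ∂ν) ^ 2 ≤ ((∫⁻ a, φ a ^ (2 : ℝ) ∂ν) ^ (1 / (2 : ℝ))) ^ 2 := by gcongr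
    _ = ∫⁻ a, φ a ^ 2 ∂ν := by
      rw [← ENNReal.rpow_natCast, ← ENNReal.rpow_mul]
      norm_num

lemma sq_sum_le_card_mul_sum_sq {ι : Type*} (s : Finset ι) (u : ι → ℝ≥0∞) :
    (∑ i ∈ s, u i) ^ 2 ≤ #s * ∑ i ∈ s, u i ^ 2 := by
  have hpow := ENNReal.rpow_sum_le_const_mul_sum_rpow s u one_le_two
  norm_num at hpow
  exact hpow

lemma add_sq_add_tsub_sq_le (a b : ℝ≥0∞) : (a + b) ^ 2 + (a - b) ^ 2 ≤ 2 * (a ^ 2 + b ^ 2) := by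
  by_cases ha : a = ∞
  · simp [ha]
  by_cases hb : b = ∞
  · simp [hb]
  lift a to ℝ≥0 using ha
  lift b to ℝ≥0 using hb
  norm_cast
  rw [← NNReal.coe_le_coe]
  rcases le_total a b with hab | hba
  · rw [tsub_eq_zero_of_le hab]
    push_cast
    nlinarith [sq_nonneg ((a : ℝ) - b)]
  · push_cast [NNReal.coe_sub hba]
    nlinarith

section Convolution

variable {g : ℝ → ℝ≥0∞} {c ε : ℝ}

/-- Convolution with the uniform distribution on `[c - ε, c + ε]`. -/
def conv (c ε : ℝ) (g : ℝ → ℝ≥0∞) (s : ℝ) : ℝ≥0∞ := ∫⁻ a, g (s - a) ∂unif c ε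

/-- The positive part of the increment of `g` over `[s - ε, s]`, as a truncated difference. -/
def posIncr (ε : ℝ) (g : ℝ → ℝ≥0∞) (s : ℝ) : ℝ≥0∞ := g s - g (s - ε)

lemma measurable_conv (hg : Measurable g) : Measurable (conv c ε g) :=
  Measurable.lintegral_prod_right' (ν := unif c ε) (f := fun p : ℝ × ℝ => g (p.1 - p.2))
    (by fun_prop)

lemma measurable_posIncr (hg : Measurable g) : Measurable (posIncr ε g) := by
  unfold posIncr
  fun_prop

lemma posIncr_conv_le (hg : Measurable g) (s : ℝ) :
    posIncr ε (conv c ε g) s ≤ conv c ε (posIncr ε g) s := by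
  simp only [posIncr, conv, sub_right_comm s ε]
  exact lintegral_sub_le _ _ (by fun_prop)

lemma two_mul_lintegral_unif (hε : 0 < ε) (hg : Measurable g) :
    2 * ∫⁻ a, g a ∂unif c ε = ∫⁻ a, (g a + g (a + ε)) ∂unif (c - ε / 2) (ε / 2) := by
  have hleft : c - ε / 2 - ε / 2 = c - ε := by ring
  have hhalves : ∫⁻ a in Icc (c - ε) (c + ε), g a =
      (∫⁻ a in Icc (c - ε) c, g a) + ∫⁻ a in Icc c (c + ε), g a := by
    rw [← Icc_union_Ioc_eq_Icc (by linarith : c - ε ≤ c) (by linarith : c ≤ c + ε),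
      lintegral_union measurableSet_Ioc, restrict_Ioc_eq_restrict_Icc]
    rw [Set.disjoint_left]
    exact fun x hx hx' => hx'.1.not_ge hx.2
  have hshift : ∫⁻ a in Icc (c - ε) c, g (a + ε) = ∫⁻ a in Icc c (c + ε), g a := by
    simpa using (measurePreserving_add_right (volume : Measure ℝ) ε).setLIntegral_comp_preimage
      (measurableSet_Icc (a := c) (b := c + ε)) hg
  rw [lintegral_unif, lintegral_unif, lintegral_add_left hg, hleft, sub_add_cancel,
    mul_div_cancel₀ _ two_ne_zero, hshift, ← hhalves, ← mul_assoc, ENNReal.ofReal_mul (by norm_num),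
    ENNReal.mul_inv (by simp) (by simp), ENNReal.ofReal_ofNat, ← mul_assoc,
    ENNReal.mul_inv_cancel (by simp) (by simp), one_mul]

lemma four_mul_lintegral_conv_sq_le (hε : 0 < ε) (hg : Measurable g) :
    4 * ∫⁻ s, conv c ε g s ^ 2 ≤ ∫⁻ s, (g s + g (s - ε)) ^ 2 := by
  set ν := unif (c - ε / 2) (ε / 2)
  have : IsProbabilityMeasure ν := isProbabilityMeasure_unif _ (half_pos hε)
  have htranslate : ∀ a, ∫⁻ s, (g (s - a) + g (s - (a + ε))) ^ 2 =
      ∫⁻ s, (g s + g (s - ε)) ^ 2 := by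
    intro a
    rw [← lintegral_sub_right_eq_self (fun s => (g s + g (s - ε)) ^ 2) a]
    simp only [sub_sub, add_comm]
  calc 4 * ∫⁻ s, conv c ε g s ^ 2 = ∫⁻ s, (2 * conv c ε g s) ^ 2 := by
        rw [← lintegral_const_mul _ ((measurable_conv hg).pow_const 2)]
        simp only [mul_pow]
        norm_num
    _ ≤ ∫⁻ s, ∫⁻ a, (g (s - a) + g (s - (a + ε))) ^ 2 ∂ν := by
        refine lintegral_mono fun s => ?_
        rw [conv, two_mul_lintegral_unif hε (g := fun a => g (s - a)) (by fun_prop)]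
        exact sq_lintegral_le (by fun_prop)
    _ = ∫⁻ a, (∫⁻ s, (g (s - a) + g (s - (a + ε))) ^ 2) ∂ν :=
        lintegral_lintegral_swap (by apply Measurable.aemeasurable; fun_prop)
    _ = ∫⁻ s, (g s + g (s - ε)) ^ 2 := by simp [htranslate]

lemma lintegral_conv_sq_add_le (hε : 0 < ε) (hg : Measurable g) :
    4 * (∫⁻ s, conv c ε g s ^ 2) + ∫⁻ s, posIncr ε g s ^ 2 ≤ 4 * ∫⁻ s, g s ^ 2 := by
  calc _ ≤ (∫⁻ s, (g s + g (s - ε)) ^ 2) + ∫⁻ s, posIncr ε g s ^ 2 := by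
        gcongr
        exact four_mul_lintegral_conv_sq_le hε hg
    _ = ∫⁻ s, ((g s + g (s - ε)) ^ 2 + (g s - g (s - ε)) ^ 2) :=
        (lintegral_add_left (by fun_prop) _).symm
    _ ≤ ∫⁻ s, 2 * (g s ^ 2 + g (s - ε) ^ 2) :=
        lintegral_mono fun s => add_sq_add_tsub_sq_le _ _
    _ = 4 * ∫⁻ s, g s ^ 2 := by
        rw [lintegral_const_mul _ (by fun_prop), lintegral_add_left (by fun_prop),
          lintegral_sub_right_eq_self (fun s => g s ^ 2) ε]
        ring

lemma lintegral_conv_sq_le (hε : 0 < ε) (hg : Measurable g) :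
    ∫⁻ s, conv c ε g s ^ 2 ≤ ∫⁻ s, g s ^ 2 :=
  (ENNReal.mul_le_mul_iff_right (by norm_num) (by norm_num)).1
    (le_self_add.trans (lintegral_conv_sq_add_le hε hg))

lemma le_add_sum_posIncr (ε : ℝ) (g : ℝ → ℝ≥0∞) (k : ℕ) (s : ℝ) :
    g s ≤ g (s - k * ε) + ∑ i ∈ range k, posIncr ε g (s - i * ε) := by
  induction k with
  | zero => simp
  | succ k ih =>
    refine ih.trans ?_
    rw [Finset.sum_range_succ, add_comm (∑ i ∈ _, _), ← add_assoc]
    gcongr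
    rw [Nat.cast_succ, add_one_mul, ← sub_sub]
    exact le_add_tsub

lemma sq_le_two_mul_add_sum_posIncr (ε : ℝ) (g : ℝ → ℝ≥0∞) (k : ℕ) (s : ℝ) :
    g s ^ 2 ≤ 2 * g (s - k * ε) ^ 2 + 2 * k * ∑ i ∈ range k, posIncr ε g (s - i * ε) ^ 2 := by
  calc g s ^ 2 ≤ (g (s - k * ε) + ∑ i ∈ range k, posIncr ε g (s - i * ε)) ^ 2 := by
        gcongr
        exact le_add_sum_posIncr ε g k s
    _ ≤ 2 * (g (s - k * ε) ^ 2 + (∑ i ∈ range k, posIncr ε g (s - i * ε)) ^ 2) :=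
        le_self_add.trans (add_sq_add_tsub_sq_le _ _)
    _ ≤ 2 * (g (s - k * ε) ^ 2 + k * ∑ i ∈ range k, posIncr ε g (s - i * ε) ^ 2) := by
        gcongr
        simpa using sq_sum_le_card_mul_sum_sq (range k) fun i => posIncr ε g (s - i * ε)
    _ = _ := by ring

lemma setLIntegral_sq_le_shift (hg : Measurable g) (ε : ℝ) (W : Set ℝ) (k : ℕ) :
    ∫⁻ s in W, g s ^ 2 ≤
      2 * (∫⁻ s in W, g (s - k * ε) ^ 2) + 2 * (k : ℝ≥0∞) ^ 2 * ∫⁻ s, posIncr ε g s ^ 2 := by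
  have hu := measurable_posIncr (ε := ε) hg
  calc ∫⁻ s in W, g s ^ 2 ≤ ∫⁻ s in W,
        (2 * g (s - k * ε) ^ 2 + 2 * k * ∑ i ∈ range k, posIncr ε g (s - i * ε) ^ 2) :=
        lintegral_mono fun s => sq_le_two_mul_add_sum_posIncr ε g k s
    _ = 2 * (∫⁻ s in W, g (s - k * ε) ^ 2) +
          2 * k * ∑ i ∈ range k, ∫⁻ s in W, posIncr ε g (s - i * ε) ^ 2 := by
        rw [lintegral_add_left (by fun_prop), lintegral_const_mul _ (by fun_prop),
          lintegral_const_mul _ (by fun_prop), lintegral_finsetSum _ (fun i _ => by fun_prop)]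
    _ ≤ 2 * (∫⁻ s in W, g (s - k * ε) ^ 2) +
          2 * k * ∑ i ∈ range k, ∫⁻ s, posIncr ε g s ^ 2 := by
        gcongr _ + 2 * _ * ∑ i ∈ range k, ?_ with i
        rw [← lintegral_sub_right_eq_self (fun s => posIncr ε g s ^ 2) (i * ε)]
        exact setLIntegral_le_lintegral _ _
    _ = _ := by
        simp only [sum_const, card_range, nsmul_eq_mul]
        ring

lemma sum_setLIntegral_translate_le {h : ℝ → ℝ≥0∞} (hh : Measurable h) (N : ℕ) {T : ℝ}
    (hT : 2 ≤ T) (b : ℝ) :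
    ∑ j ∈ range N, ∫⁻ s in Ioc (b - 1) (b + 1), h (s - j * T) ≤ ∫⁻ s, h s := by
  have htranslate : ∀ j : ℕ, ∫⁻ s in Ioc (b - 1) (b + 1), h (s - j * T) =
      ∫⁻ s in (fun s => s + j * T) ⁻¹' Ioc (b - 1) (b + 1), h s := by
    intro j
    rw [← (measurePreserving_add_right (volume : Measure ℝ) (j * T)).setLIntegral_comp_preimage
      measurableSet_Ioc (f := fun s => h (s - j * T)) (by fun_prop)]
    simp
  simp only [htranslate]
  rw [← lintegral_biUnion_finset]
  · exact setLIntegral_le_lintegral _ _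
  · intro i _ j _ hij
    rw [Function.onFun, Set.disjoint_left]
    rintro s ⟨h₁, h₂⟩ ⟨h₃, h₄⟩
    dsimp only at h₁ h₂ h₃ h₄
    rcases hij.lt_or_gt with hlt | hgt
    · have : (i : ℝ) + 1 ≤ j := mod_cast hlt
      nlinarith
    · have : (j : ℝ) + 1 ≤ i := mod_cast hgt
      nlinarith
  · exact fun i _ => measurableSet_Ioc.preimage (by fun_prop)

/-- The constant of `lintegral_window_le`. -/
def windowConst (ε : ℝ) : ℝ≥0∞ := 512 * (⌈2 / ε⌉₊ : ℝ≥0∞) ^ 2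

-- If the increments are small then all of the eight disjoint translates of the window by multiples
-- of `⌈2 / ε⌉₊ * ε ≥ 2` carry about the same share of `∫ g ^ 2`.
lemma lintegral_window_le (hε : 0 < ε) (b : ℝ) (hg : Measurable g) :
    4 * ∫⁻ s in Ioc (b - 1) (b + 1), g s ^ 2 ≤
      (∫⁻ s, g s ^ 2) + windowConst ε * ∫⁻ s, posIncr ε g s ^ 2 := by
  set n := ⌈2 / ε⌉₊
  set W := Ioc (b - 1) (b + 1)
  have hn : 2 ≤ n * ε := (div_le_iff₀ hε).1 (Nat.le_ceil _)
  have hshift : ∀ j ∈ range 8, ∫⁻ s in W, g s ^ 2 ≤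
      2 * (∫⁻ s in W, g (s - j * (n * ε)) ^ 2) +
        2 * (8 * n : ℝ≥0∞) ^ 2 * ∫⁻ s, posIncr ε g s ^ 2 := by
    intro j hj
    have hjn : ((j * n : ℕ) : ℝ≥0∞) ≤ 8 * n :=
      mod_cast Nat.mul_le_mul_right n (Finset.mem_range.1 hj).le
    refine (setLIntegral_sq_le_shift hg ε W (j * n)).trans ?_
    rw [← mul_assoc, ← Nat.cast_mul]
    gcongr
  refine (ENNReal.mul_le_mul_iff_right (a := 2) (by norm_num) (by norm_num)).1 ?_
  calc 2 * (4 * ∫⁻ s in W, g s ^ 2) = ∑ j ∈ range 8, ∫⁻ s in W, g s ^ 2 := by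
        simp only [sum_const, card_range, nsmul_eq_mul]
        ring
    _ ≤ ∑ j ∈ range 8, (2 * (∫⁻ s in W, g (s - j * (n * ε)) ^ 2) +
          2 * (8 * n : ℝ≥0∞) ^ 2 * ∫⁻ s, posIncr ε g s ^ 2) := Finset.sum_le_sum hshift
    _ = 2 * ((∑ j ∈ range 8, ∫⁻ s in W, g (s - j * (n * ε)) ^ 2) +
          windowConst ε * ∫⁻ s, posIncr ε g s ^ 2) := by
        rw [Finset.sum_add_distrib, ← Finset.mul_sum, windowConst]
        simp only [sum_const, card_range, nsmul_eq_mul]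
        push_cast
        ring
    _ ≤ _ := by
        gcongr
        exact sum_setLIntegral_translate_le (hg.pow_const 2) 8 hn b

lemma lintegral_window_conv_le (hε : 0 < ε) (b : ℝ) (hg : Measurable g) :
    4 * ∫⁻ s in Ioc (b - 1) (b + 1), conv c ε g s ^ 2 ≤
      (∫⁻ s, conv c ε g s ^ 2) + windowConst ε * ∫⁻ s, posIncr ε g s ^ 2 := by
  refine (lintegral_window_le hε b (measurable_conv hg)).trans ?_
  gcongr _ + _ * ?_
  calc ∫⁻ s, posIncr ε (conv c ε g) s ^ 2 ≤ ∫⁻ s, conv c ε (posIncr ε g) s ^ 2 := by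
        gcongr with s
        exact posIncr_conv_le hg s
    _ ≤ ∫⁻ s, posIncr ε g s ^ 2 := lintegral_conv_sq_le hε (measurable_posIncr hg)

end Convolution

section Contraction

variable {E ε c c' : ℝ} {f : ℝ × ℝ → ℝ≥0∞}

lemma avgStep_apply_one (hf : HomNeg 1 f) {t : ℝ} (ht : t ≠ 0) :
    avgStep E ε c f (t, 1) = ‖t‖ₑ⁻¹ * conv c ε (fun s => f (s, 1)) (E - t⁻¹) := by
  rw [avgStep, conv, ← lintegral_const_mul' _ _ (by simp [ht])]
  refine lintegral_congr fun a => ?_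
  rw [transfer, hf.apply_of_ne _ ht, pow_one]
  congr 3
  field_simp
  ring

lemma mass_sq_avgStep (hf : HomNeg 1 f) :
    mass (avgStep E ε c f ^ 2) = ∫⁻ s, conv c ε (fun s => f (s, 1)) s ^ 2 := by
  rw [← lintegral_sub_inv_univ E fun s => conv c ε (fun s => f (s, 1)) s ^ 2]
  refine lintegral_congr_ae ?_
  filter_upwards [Measure.ae_ne volume (0 : ℝ)] with t ht
  rw [Pi.pow_apply, avgStep_apply_one hf ht, mul_pow]

lemma mass_sq_avgStep_add_le (hε : 0 < ε) (hf : HomNeg 1 f) (hm : Measurable f) :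
    4 * mass (avgStep E ε c f ^ 2) + ∫⁻ s, posIncr ε (fun s => f (s, 1)) s ^ 2 ≤
      4 * mass (f ^ 2) := by
  rw [mass_sq_avgStep hf]
  exact lintegral_conv_sq_add_le hε (by fun_prop)

lemma image_sub_inv_Ioc (E : ℝ) :
    (fun t : ℝ => E - t⁻¹) '' (Ioc (0 - 1) (0 + 1) \ {0}) = (Ioc (E - 1) (E + 1))ᶜ := by
  ext s
  simp only [Set.mem_image, Set.mem_sdiff, Set.mem_Ioc, Set.mem_singleton_iff, Set.mem_compl_iff,
    zero_sub, zero_add]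
  constructor
  · rintro ⟨t, ⟨⟨h₁, h₂⟩, h₀⟩, rfl⟩ ⟨h₃, h₄⟩
    have hinv : t * t⁻¹ = 1 := mul_inv_cancel₀ h₀
    obtain _ | _ := lt_or_gt_of_ne h₀ <;> nlinarith
  · intro hs
    have h₀ : E - s ≠ 0 := fun h => hs ⟨by linarith, by linarith⟩
    have hinv : (E - s) * (E - s)⁻¹ = 1 := mul_inv_cancel₀ h₀
    refine ⟨(E - s)⁻¹, ⟨?_, inv_ne_zero h₀⟩, by simp⟩
    by_cases h₁ : E - 1 < s
    · have h₂ : E + 1 < s := not_le.1 fun h => hs ⟨h₁, h⟩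
      have : (E - s)⁻¹ < 0 := inv_lt_zero.2 (by linarith)
      constructor <;> nlinarith
    · have : 0 < (E - s)⁻¹ := inv_pos.2 (by linarith)
      constructor <;> nlinarith

lemma lintegral_window_sq_avgStep (hf : HomNeg 1 f) :
    ∫⁻ t in Ioc (0 - 1) (0 + 1), avgStep E ε c f (t, 1) ^ 2 =
      ∫⁻ s in (Ioc (E - 1) (E + 1))ᶜ, conv c ε (fun s => f (s, 1)) s ^ 2 := by
  have hS : MeasurableSet (Ioc ((0 : ℝ) - 1) (0 + 1) \ {0}) :=
    measurableSet_Ioc.diff (measurableSet_singleton 0)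
  have hae : (Ioc ((0 : ℝ) - 1) (0 + 1) \ {0} : Set ℝ) =ᵐ[volume] Ioc ((0 : ℝ) - 1) (0 + 1) :=
    sdiff_null_ae_eq_self (by simp)
  rw [← image_sub_inv_Ioc, ← lintegral_sub_inv E hS (by simp), ← setLIntegral_congr hae]
  refine setLIntegral_congr_fun hS fun t ht => ?_
  simp only [avgStep_apply_one hf fun h₀ => ht.2 h₀, mul_pow]

-- The chart `t ↦ E - t⁻¹` exchanges a window with the complement of another, so the mass cannot
-- concentrate on both unless one of the two steps has large increments.
lemma two_mul_mass_sq_avgStep_le (hε : 0 < ε) (hf : HomNeg 1 f) (hm : Measurable f)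
    (hfin : mass (avgStep E ε c' f ^ 2) ≠ ∞) :
    2 * mass (avgStep E ε c' f ^ 2) ≤ windowConst ε *
      ((∫⁻ s, posIncr ε (fun s => f (s, 1)) s ^ 2) +
        ∫⁻ t, posIncr ε (fun t => avgStep E ε c' f (t, 1)) t ^ 2) := by
  set X := ∫⁻ s, posIncr ε (fun s => f (s, 1)) s ^ 2
  set Y := ∫⁻ t, posIncr ε (fun t => avgStep E ε c' f (t, 1)) t ^ 2
  set h := conv c' ε fun s => f (s, 1)
  set H := mass (avgStep E ε c' f ^ 2)
  have hH : H = ∫⁻ s, h s ^ 2 := mass_sq_avgStep hf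
  have hinner : 4 * ∫⁻ s in Ioc (E - 1) (E + 1), h s ^ 2 ≤ H + windowConst ε * X := by
    rw [hH]
    exact lintegral_window_conv_le hε E (by fun_prop)
  have houter : 4 * ∫⁻ s in (Ioc (E - 1) (E + 1))ᶜ, h s ^ 2 ≤ H + windowConst ε * Y := by
    rw [← lintegral_window_sq_avgStep hf]
    have hk := measurable_avgStep (E := E) (ε := ε) (c := c') hm
    exact lintegral_window_le hε 0 (by fun_prop)
  refine (ENNReal.add_le_add_iff_left (ENNReal.mul_ne_top ENNReal.ofNat_ne_top hfin)).1
    (?_ : 2 * H + 2 * H ≤ 2 * H + _)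
  calc 2 * H + 2 * H = 4 * (∫⁻ s in Ioc (E - 1) (E + 1), h s ^ 2) +
        4 * ∫⁻ s in (Ioc (E - 1) (E + 1))ᶜ, h s ^ 2 := by
        rw [← mul_add (4 : ℝ≥0∞), lintegral_add_compl _ measurableSet_Ioc, ← hH]
        ring
    _ ≤ (H + windowConst ε * X) + (H + windowConst ε * Y) := add_le_add hinner houter
    _ = 2 * H + windowConst ε * (X + Y) := by ring

lemma mass_sq_avgStep_le (hε : 0 < ε) (hf : HomNeg 1 f) (hm : Measurable f) :
    mass (avgStep E ε c f ^ 2) ≤ mass (f ^ 2) := by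
  rw [mass_sq_avgStep hf]
  exact lintegral_conv_sq_le hε (by fun_prop)

lemma mul_mass_sq_avgStep_avgStep_le (hε : 0 < ε) (hf : HomNeg 1 f) (hm : Measurable f)
    (hfin : mass (f ^ 2) ≠ ∞) :
    (4 * windowConst ε + 2) * mass (avgStep E ε c (avgStep E ε c' f) ^ 2) ≤
      4 * windowConst ε * mass (f ^ 2) := by
  set D := windowConst ε
  set X := ∫⁻ s, posIncr ε (fun s => f (s, 1)) s ^ 2
  set Y := ∫⁻ t, posIncr ε (fun t => avgStep E ε c' f (t, 1)) t ^ 2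
  set H := mass (avgStep E ε c' f ^ 2)
  set Z := mass (avgStep E ε c (avgStep E ε c' f) ^ 2)
  have hf' := hf.avgStep (E := E) (ε := ε) (c := c') hm
  have hm' := measurable_avgStep (E := E) (ε := ε) (c := c') hm
  have hH : 4 * H + X ≤ 4 * mass (f ^ 2) := mass_sq_avgStep_add_le hε hf hm
  have hZ : 4 * Z + Y ≤ 4 * H := mass_sq_avgStep_add_le hε hf' hm'
  have hHfin : H ≠ ∞ := ne_top_of_le_ne_top hfin (mass_sq_avgStep_le hε hf hm)
  calc (4 * D + 2) * Z = 4 * D * Z + 2 * Z := by ring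
    _ ≤ 4 * D * Z + 2 * H := by gcongr; exact mass_sq_avgStep_le hε hf' hm'
    _ ≤ 4 * D * Z + D * (X + Y) :=
        add_le_add_right (two_mul_mass_sq_avgStep_le hε hf hm hHfin) _
    _ = D * ((4 * Z + Y) + X) := by ring
    _ ≤ D * (4 * H + X) := by gcongr
    _ ≤ D * (4 * mass (f ^ 2)) := by gcongr
    _ = _ := by ring

/-- The factor by which two random transfer steps contract the `L²` norm of functions of
degree `-1`. -/
def contractionRate (ε : ℝ) : ℝ≥0∞ :=
  (4 * windowConst ε / (4 * windowConst ε + 2)) ^ (1 / 2 : ℝ)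

lemma contractionRate_lt_one (ε : ℝ) : contractionRate ε < 1 := by
  refine ENNReal.rpow_lt_one (ENNReal.div_lt_of_lt_mul ?_) (by norm_num)
  rw [one_mul, windowConst]
  exact ENNReal.lt_add_right (by finiteness) (by simp)

lemma mass_sq_avgStep_avgStep_le (hε : 0 < ε) (hf : HomNeg 1 f) (hm : Measurable f)
    (hfin : mass (f ^ 2) ≠ ∞) :
    mass (avgStep E ε c (avgStep E ε c' f) ^ 2) ≤ contractionRate ε ^ 2 * mass (f ^ 2) := by
  have hsq : contractionRate ε ^ 2 = 4 * windowConst ε / (4 * windowConst ε + 2) := by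
    rw [contractionRate, ← ENNReal.rpow_natCast, ← ENNReal.rpow_mul]
    norm_num
  rw [hsq, ← ENNReal.mul_div_right_comm, ENNReal.le_div_iff_mul_le (by simp)
    (.inl (by unfold windowConst; finiteness)), mul_comm]
  exact mul_mass_sq_avgStep_avgStep_le hε hf hm hfin

end Contraction

/-! ### Uniform decay of iterated averages -/

/-- The average of `h` over `l` transfer steps with independent potential values, uniformly
distributed on the intervals of radius `ε` around `c n, …, c (n + l - 1)`. -/
def iterAvg (E ε : ℝ) (c : ℕ → ℝ) : ℕ → ℕ → (ℝ × ℝ → ℝ≥0∞) → ℝ × ℝ → ℝ≥0∞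
  | _, 0, h => h
  | n, l + 1, h => avgStep E ε (c n) (iterAvg E ε c (n + 1) l h)

section IterAvg

variable {E ε B : ℝ} {c : ℕ → ℝ} {h f : ℝ × ℝ → ℝ≥0∞}

lemma measurable_iterAvg (n l : ℕ) (hh : Measurable h) : Measurable (iterAvg E ε c n l h) := by
  induction l generalizing n with
  | zero => exact hh
  | succ l ih => exact measurable_avgStep (ih _)

lemma HomNeg.iterAvg {k : ℕ} (n l : ℕ) (hk : HomNeg k h) (hh : Measurable h) :
    HomNeg k (iterAvg E ε c n l h) := by
  induction l generalizing n with
  | zero => exact hk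
  | succ l ih => exact (ih _).avgStep (measurable_iterAvg _ _ hh)

lemma mass_iterAvg (hε : 0 < ε) (n l : ℕ) (hh : HomNeg 2 h) (hm : Measurable h) :
    mass (iterAvg E ε c n l h) = mass h := by
  induction l generalizing n with
  | zero => rfl
  | succ l ih =>
    exact (mass_avgStep hε (hh.iterAvg _ _ hm) (measurable_iterAvg _ _ hm)).trans (ih _)

lemma mass_sq_iterAvg_le (hε : 0 < ε) (n l : ℕ) (hf : HomNeg 1 f) (hm : Measurable f)
    (hfin : mass (f ^ 2) ≠ ∞) :
    mass (iterAvg E ε c n l f ^ 2) ≤ (contractionRate ε ^ (l / 2)) ^ 2 * mass (f ^ 2) := by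
  induction l using Nat.twoStepInduction generalizing n with
  | zero => simp [iterAvg]
  | one => simpa [iterAvg] using! mass_sq_avgStep_le hε hf hm
  | more l ih _ =>
    have hrate : contractionRate ε ≠ ∞ := (contractionRate_lt_one ε).ne_top
    calc mass (iterAvg E ε c n (l + 2) f ^ 2)
        ≤ contractionRate ε ^ 2 * mass (iterAvg E ε c (n + 1 + 1) l f ^ 2) :=
          mass_sq_avgStep_avgStep_le hε (hf.iterAvg _ _ hm) (measurable_iterAvg _ _ hm)
            (ne_top_of_le_ne_top (by finiteness) (ih _))
      _ ≤ contractionRate ε ^ 2 * ((contractionRate ε ^ (l / 2)) ^ 2 * mass (f ^ 2)) := by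
          gcongr
          exact ih _
      _ = _ := by
          rw [Nat.add_div_right l two_pos]
          ring

lemma avgStep_sq_le (hε : 0 < ε) (hm : Measurable f) {a : ℝ} :
    avgStep E ε a f ^ 2 ≤ avgStep E ε a (f ^ 2) := by
  have := isProbabilityMeasure_unif a hε
  exact fun x => sq_lintegral_le (measurable_comp_transfer_sub hm E x).aemeasurable

lemma mass_sq_inv_enorm_ne_top : mass ((fun x => ‖x‖ₑ⁻¹) ^ 2) ≠ ∞ := by
  have hbound : ∀ t : ℝ, (‖(t, (1 : ℝ))‖ₑ⁻¹) ^ 2 ≤ ENNReal.ofReal (2 * (1 + t ^ 2)⁻¹) := by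
    intro t
    have ht : |t| ≤ ‖(t, (1 : ℝ))‖ := norm_fst_le (t, (1 : ℝ))
    have hone : 1 ≤ ‖(t, (1 : ℝ))‖ := norm_one.symm.le.trans (norm_snd_le (t, (1 : ℝ)))
    rw [← ofReal_norm, ← ENNReal.ofReal_inv_of_pos (by linarith),
      ← ENNReal.ofReal_pow (by positivity)]
    refine ENNReal.ofReal_le_ofReal ?_
    rw [inv_pow, inv_eq_one_div, ← div_eq_mul_inv, div_le_div_iff₀ (by positivity) (by positivity)]
    nlinarith [sq_abs t, abs_nonneg t]
  exact ne_top_of_le_ne_top (integrable_inv_one_add_sq.const_mul 2).lintegral_lt_top.ne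
    (lintegral_mono hbound)

/-- The constant of the decay estimates, for noise of size `ε` and energies with
`|E - c n| + ε ≤ B`. -/
def decayConst (ε B : ℝ) : ℝ≥0∞ :=
  1 + ENNReal.ofReal (B + 1) * (1 + (ENNReal.ofReal (2 * ε))⁻¹ * mass ((fun x => ‖x‖ₑ⁻¹) ^ 2))

lemma decayConst_ne_top (hε : 0 < ε) (B : ℝ) : decayConst ε B ≠ ∞ := by
  have hinv : (ENNReal.ofReal (2 * ε))⁻¹ ≠ ∞ := by simpa using hε
  have hmass := mass_sq_inv_enorm_ne_top
  unfold decayConst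
  finiteness

lemma one_le_decayConst (ε B : ℝ) : 1 ≤ decayConst ε B := le_self_add

lemma ofReal_le_decayConst (ε B : ℝ) : ENNReal.ofReal (B + 1) ≤ decayConst ε B :=
  (le_mul_of_one_le_right' le_self_add).trans le_add_self

lemma avgStep_avgStep_le_decayConst {a a' : ℝ} (hε : 0 < ε) (hE : |E - a| + ε ≤ B)
    (hh : HomNeg 2 h) (hm : Measurable h) {ρ : ℝ≥0∞}
    (hmass : mass h ≤ ρ ^ 2 * mass ((fun x => ‖x‖ₑ⁻¹) ^ 2)) {x : ℝ × ℝ} (hx : x ≠ 0) :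
    avgStep E ε a (avgStep E ε a' h) x ≤ (decayConst ε B * ρ * ‖x‖ₑ⁻¹) ^ 2 := by
  set M := (ENNReal.ofReal (2 * ε))⁻¹ * mass ((fun x => ‖x‖ₑ⁻¹) ^ 2)
  set κ := ENNReal.ofReal (B + 1)
  have hM : M ≤ (1 + M) ^ 2 := le_add_self.trans (le_self_pow le_self_add two_ne_zero)
  calc avgStep E ε a (avgStep E ε a' h) x
      ≤ (ENNReal.ofReal (2 * ε))⁻¹ *
          ((κ * ‖x‖ₑ⁻¹) ^ 2 * (ρ ^ 2 * mass ((fun x => ‖x‖ₑ⁻¹) ^ 2))) := by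
        refine (avgStep_avgStep_le_mass hε hE hh hm hx).trans ?_
        gcongr
    _ = M * (κ * ρ * ‖x‖ₑ⁻¹) ^ 2 := by ring
    _ ≤ (1 + M) ^ 2 * (κ * ρ * ‖x‖ₑ⁻¹) ^ 2 := by gcongr
    _ = (κ * (1 + M) * ρ * ‖x‖ₑ⁻¹) ^ 2 := by ring
    _ ≤ (decayConst ε B * ρ * ‖x‖ₑ⁻¹) ^ 2 := by
        gcongr
        exact le_add_self

/-- The decay of the average of `‖·‖⁻¹` over `l` random transfer steps. -/
def decay (ε B : ℝ) (l : ℕ) : ℝ≥0∞ := decayConst ε B * contractionRate ε ^ ((l - 2) / 2)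

theorem iterAvg_inv_enorm_sq_le (hε : 0 < ε) (hE : ∀ n, |E - c n| + ε ≤ B) (n l : ℕ)
    {x : ℝ × ℝ} (hx : x ≠ 0) :
    iterAvg E ε c n l (fun x => ‖x‖ₑ⁻¹ ^ 2) x ≤ decayConst ε B ^ 2 * ‖x‖ₑ⁻¹ ^ 2 := by
  rw [← mul_pow]
  match l with
  | 0 =>
    rw [iterAvg]
    gcongr
    exact le_mul_of_one_le_left' (one_le_decayConst ε B)
  | 1 =>
    refine (avgStep_inv_enorm_pow_le hε (hE n) 2 x).trans ?_
    gcongr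
    exact ofReal_le_decayConst ε B
  | l + 2 =>
    have hh : HomNeg 2 fun x => ‖x‖ₑ⁻¹ ^ 2 := homNeg_inv_enorm.sq
    have hm : Measurable fun x : ℝ × ℝ => ‖x‖ₑ⁻¹ ^ 2 := by fun_prop
    have hmass : mass (iterAvg E ε c (n + 1 + 1) l fun x => ‖x‖ₑ⁻¹ ^ 2) ≤
        1 ^ 2 * mass ((fun x => ‖x‖ₑ⁻¹) ^ 2) := by
      rw [one_pow, one_mul, mass_iterAvg hε _ _ hh hm]
      rfl
    rw [iterAvg, iterAvg]
    simpa only [mul_one] using avgStep_avgStep_le_decayConst hε (hE n) (hh.iterAvg _ _ hm)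
      (measurable_iterAvg _ _ hm) hmass hx

theorem iterAvg_inv_enorm_le (hε : 0 < ε) (hE : ∀ n, |E - c n| + ε ≤ B) (n l : ℕ)
    {x : ℝ × ℝ} (hx : x ≠ 0) :
    iterAvg E ε c n l (fun x => ‖x‖ₑ⁻¹) x ≤ decay ε B l * ‖x‖ₑ⁻¹ := by
  rw [decay]
  match l with
  | 0 => simpa [iterAvg] using le_mul_of_one_le_left' (one_le_decayConst ε B)
  | 1 =>
    refine (by simpa using! avgStep_inv_enorm_pow_le hε (hE n) 1 x : _ ≤ _).trans ?_
    simp only [Nat.reduceSub, Nat.reduceDiv, pow_zero, mul_one]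
    gcongr
    exact ofReal_le_decayConst ε B
  | l + 2 =>
    have hh : HomNeg 1 fun x => ‖x‖ₑ⁻¹ := homNeg_inv_enorm
    have hm : Measurable fun x : ℝ × ℝ => ‖x‖ₑ⁻¹ := by fun_prop
    set f := iterAvg E ε c (n + 1 + 1) l fun x => ‖x‖ₑ⁻¹
    have hfm : Measurable f := measurable_iterAvg _ _ hm
    refine (ENNReal.pow_le_pow_left_iff two_ne_zero).1 ?_
    calc iterAvg E ε c n (l + 2) (fun x => ‖x‖ₑ⁻¹) x ^ 2
        ≤ avgStep E ε (c n) (avgStep E ε (c (n + 1)) f ^ 2) x :=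
          avgStep_sq_le hε (measurable_avgStep hfm) x
      _ ≤ avgStep E ε (c n) (avgStep E ε (c (n + 1)) (f ^ 2)) x :=
          avgStep_mono (avgStep_sq_le hε hfm) x
      _ ≤ _ := avgStep_avgStep_le_decayConst hε (hE n) (hh.iterAvg _ _ hm).sq (hfm.pow_const 2)
          (mass_sq_iterAvg_le hε _ _ hh hm mass_sq_inv_enorm_ne_top) hx

lemma tsum_decay_ne_top (hε : 0 < ε) (B : ℝ) : ∑' l, decay ε B l ≠ ∞ := by
  have hgeom : ∑' m : ℕ, contractionRate ε ^ m ≠ ∞ := by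
    rw [ENNReal.tsum_geometric]
    exact ENNReal.inv_ne_top.2 (tsub_pos_of_lt (contractionRate_lt_one ε)).ne'
  have hodd : ∀ m : ℕ, (2 * m + 1) / 2 = m := fun m => by omega
  have heven : ∀ m : ℕ, 2 * m / 2 = m := fun m => by omega
  simp only [decay, ENNReal.tsum_mul_left]
  refine ENNReal.mul_ne_top (decayConst_ne_top hε B) ?_
  rw [← Summable.sum_add_tsum_nat_add' (k := 2) ENNReal.summable]
  simp only [Nat.add_sub_cancel]
  rw [← tsum_even_add_odd ENNReal.summable ENNReal.summable]
  simp only [hodd, heven]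
  have hhead : ∑ i ∈ range 2, contractionRate ε ^ ((i - 2) / 2) ≠ ∞ := by simp [sum_range_succ]
  finiteness

end IterAvg

/-! ### Half-line solutions -/

section Solutions

/-- The half-line solution with boundary condition `σ`, as a polynomial in the energy. Indices are
shifted by one: index `0` is the boundary value `σ` at site `-1` and index `n + 1` is site `n`. -/
def solPoly (σ : ℝ) (v : ℕ → ℝ) : ℕ → ℝ[X]
  | 0 => C σ
  | 1 => 1
  | n + 2 => (X - C (v n)) * solPoly σ v (n + 1) - solPoly σ v n

/-- The half-line solution with boundary condition `σ` at the energy `E`. -/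
def sol (σ : ℝ) (v : ℕ → ℝ) (E : ℝ) (n : ℕ) : ℝ := (solPoly σ v n).eval E

/-- The pair of consecutive values determined by the first `n` potential values. -/
def state (σ : ℝ) (v : ℕ → ℝ) (E : ℝ) (n : ℕ) : ℝ × ℝ := (sol σ v E (n + 1), sol σ v E n)

/-- The sum of squares of the values determined by the first `n` potential values. -/
def sumSq (σ : ℝ) (v : ℕ → ℝ) (E : ℝ) (n : ℕ) : ℝ := ∑ i ∈ range (n + 2), sol σ v E i ^ 2

/-- The inverse `ℓ²` norm of the values determined by the first `n` potential values. -/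
def solNormInv (σ : ℝ) (v : ℕ → ℝ) (E : ℝ) (n : ℕ) : ℝ≥0∞ :=
  (ENNReal.ofReal √(sumSq σ v E n))⁻¹

/-- The fraction of `sumSq σ v E n` that does not come from the first `m` potential values. -/
def frac (σ : ℝ) (v : ℕ → ℝ) (E : ℝ) (m n : ℕ) : ℝ := 1 - sumSq σ v E m / sumSq σ v E n

variable {σ : ℝ} {v w : ℕ → ℝ} {E : ℝ}

@[simp] lemma sol_zero : sol σ v E 0 = σ := by simp [sol, solPoly]

@[simp] lemma sol_one : sol σ v E 1 = 1 := by simp [sol, solPoly]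

lemma sol_add_two (n : ℕ) : sol σ v E (n + 2) = (E - v n) * sol σ v E (n + 1) - sol σ v E n := by
  simp [sol, solPoly]

lemma state_succ (n : ℕ) : state σ v E (n + 1) = transfer (E - v n) (state σ v E n) := by
  simp only [state, transfer, sol_add_two]

lemma state_ne_zero (n : ℕ) : state σ v E n ≠ 0 := by
  induction n with
  | zero => simp [state]
  | succ n ih =>
    rw [state_succ]
    exact transfer_ne_zero _ ih

lemma one_le_sumSq (n : ℕ) : 1 ≤ sumSq σ v E n := by
  simpa [sumSq] using single_le_sum (f := fun i => sol σ v E i ^ 2) (s := range (n + 2)) (a := 1)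
    (fun i _ => sq_nonneg _) (by simp)

lemma sumSq_pos (n : ℕ) : 0 < sumSq σ v E n := zero_lt_one.trans_le (one_le_sumSq n)

lemma sumSq_add (n l : ℕ) :
    sumSq σ v E (n + l) = sumSq σ v E n + ∑ j ∈ range l, sol σ v E (n + 2 + j) ^ 2 := by
  rw [sumSq, sumSq, add_right_comm, sum_range_add]

lemma sumSq_mono : Monotone (sumSq σ v E) := by
  intro m n hmn
  obtain ⟨l, rfl⟩ := Nat.exists_eq_add_of_le hmn
  rw [sumSq_add]
  exact le_add_of_nonneg_right (sum_nonneg fun i _ => sq_nonneg _)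

lemma solNormInv_anti : Antitone (solNormInv σ v E) := by
  intro m n hmn
  unfold solNormInv
  gcongr
  exact sumSq_mono hmn

lemma frac_nonneg {m n : ℕ} (hmn : m ≤ n) : 0 ≤ frac σ v E m n :=
  sub_nonneg.2 (div_le_one_of_le₀ (sumSq_mono hmn) (sumSq_pos n).le)

lemma frac_self (n : ℕ) : frac σ v E n n = 0 := by
  rw [frac, div_self (sumSq_pos n).ne', sub_self]

lemma solPoly_congr {n : ℕ} (h : ∀ i, i + 1 < n → v i = w i) :
    solPoly σ v n = solPoly σ w n := by
  induction n using Nat.twoStepInduction with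
  | zero => rfl
  | one => rfl
  | more n ih₀ ih₁ =>
    rw [solPoly, solPoly, ih₀ fun i hi => h i (by omega), ih₁ fun i hi => h i (by omega),
      h n (by omega)]

lemma sol_congr {n : ℕ} (h : ∀ i, i + 1 < n → v i = w i) : sol σ v E n = sol σ w E n := by
  rw [sol, sol, solPoly_congr h]

lemma state_congr {n : ℕ} (h : ∀ i < n, v i = w i) : state σ v E n = state σ w E n := by
  rw [state, state, sol_congr fun i hi => h i (by omega), sol_congr fun i hi => h i (by omega)]

lemma sumSq_congr {n : ℕ} (h : ∀ i < n, v i = w i) : sumSq σ v E n = sumSq σ w E n :=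
  sum_congr rfl fun i hi => by
    rw [sol_congr fun k hk => h k (by have := Finset.mem_range.1 hi; omega)]

lemma solNormInv_congr {n : ℕ} (h : ∀ i < n, v i = w i) :
    solNormInv σ v E n = solNormInv σ w E n := by
  rw [solNormInv, solNormInv, sumSq_congr h]

lemma frac_congr {m n : ℕ} (hmn : m ≤ n) (h : ∀ i < n, v i = w i) :
    frac σ v E m n = frac σ w E m n := by
  rw [frac, frac, sumSq_congr h, sumSq_congr fun i hi => h i (by omega)]

lemma continuous_sol (n : ℕ) : Continuous fun p : (ℕ → ℝ) × ℝ => sol σ p.1 p.2 n := by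
  induction n using Nat.twoStepInduction with
  | zero => simpa using continuous_const
  | one => simpa using continuous_const
  | more n ih₀ ih₁ =>
    simp only [sol_add_two]
    fun_prop

section Measurability

variable {Ω : Type*} [MeasurableSpace Ω] {u : Ω → ℕ → ℝ} {e : Ω → ℝ}

@[fun_prop]
lemma measurable_sol (hu : Measurable u) (he : Measurable e) (n : ℕ) :
    Measurable fun x => sol σ (u x) (e x) n :=
  (continuous_sol n).measurable.comp (hu.prodMk he)

@[fun_prop]
lemma measurable_state (hu : Measurable u) (he : Measurable e) (n : ℕ) :
    Measurable fun x => state σ (u x) (e x) n :=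
  (measurable_sol hu he (n + 1)).prodMk (measurable_sol hu he n)

@[fun_prop]
lemma measurable_sumSq (hu : Measurable u) (he : Measurable e) (n : ℕ) :
    Measurable fun x => sumSq σ (u x) (e x) n := by
  unfold sumSq
  fun_prop

@[fun_prop]
lemma measurable_solNormInv (hu : Measurable u) (he : Measurable e) (n : ℕ) :
    Measurable fun x => solNormInv σ (u x) (e x) n :=
  (measurable_sumSq hu he n).sqrt.ennreal_ofReal.inv

@[fun_prop]
lemma measurable_frac (hu : Measurable u) (he : Measurable e) (m n : ℕ) :
    Measurable fun x => frac σ (u x) (e x) m n :=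
  ((measurable_sumSq hu he m).div (measurable_sumSq hu he n)).const_sub 1

end Measurability

lemma frac_add_eq_sum (n l : ℕ) : frac σ v E n (n + l) =
    ∑ j ∈ range l, sol σ v E (n + 2 + j) ^ 2 / sumSq σ v E (n + l) := by
  have hpos := sumSq_pos (σ := σ) (v := v) (E := E) (n + l)
  rw [← sum_div, frac, eq_div_iff hpos.ne', sub_mul, div_mul_cancel₀ _ hpos.ne', one_mul]
  exact sub_eq_of_eq_add' (sumSq_add n l)

lemma sq_div_sumSq_le {n l j : ℕ} (hj : j < l) :
    sol σ v E (n + 2 + j) ^ 2 / sumSq σ v E (n + l) ≤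
      (√(sumSq σ v E n))⁻¹ * |sol σ v E (n + 2 + j)| := by
  set u := sol σ v E (n + 2 + j)
  set s := sumSq σ v E n
  set t := sumSq σ v E (n + l) with ht
  have hs : 0 < s := sumSq_pos n
  have hst : s ≤ t := sumSq_mono (Nat.le_add_right _ _)
  have ht0 : 0 ≤ t := (hs.trans_le hst).le
  have hut : u ^ 2 ≤ t := by
    have hsingle := single_le_sum (f := fun j => sol σ v E (n + 2 + j) ^ 2)
      (fun i _ => sq_nonneg _) (Finset.mem_range.2 hj)
    rw [ht, sumSq_add]
    linarith
  calc u ^ 2 / t = |u| * (|u| / t) := by rw [← sq_abs]; ring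
    _ ≤ |u| * (√t / t) := by gcongr; exact Real.abs_le_sqrt hut
    _ = (√t)⁻¹ * |u| := by rw [Real.sqrt_div_self, mul_comm]
    _ ≤ (√s)⁻¹ * |u| := by gcongr

lemma frac_le (n l : ℕ) : ENNReal.ofReal (frac σ v E n (n + l)) ≤
    ∑ j ∈ range l, solNormInv σ v E n * ‖state σ v E (n + (j + 1))‖ₑ := by
  rw [frac_add_eq_sum, ENNReal.ofReal_sum_of_nonneg fun i _ =>
    div_nonneg (sq_nonneg _) (sumSq_pos _).le]
  refine sum_le_sum fun j hj => ?_
  refine (ENNReal.ofReal_le_ofReal (sq_div_sumSq_le (Finset.mem_range.1 hj))).trans ?_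
  rw [ENNReal.ofReal_mul (by positivity),
    ENNReal.ofReal_inv_of_pos (Real.sqrt_pos.2 (sumSq_pos n)), ← solNormInv, ← ofReal_norm]
  gcongr
  rw [show n + 2 + j = n + (j + 1) + 1 by ring]
  exact norm_fst_le (state σ v E (n + (j + 1)))

end Solutions

/-! ### Averages over the potential -/

section Marginal

variable {σ E ε B : ℝ} {v c : ℕ → ℝ}

/-- The laws of the random potential values: uniform on the intervals `[c n - ε, c n + ε]`. -/
abbrev noise (c : ℕ → ℝ) (ε : ℝ) : (i : ℕ) → Measure ((fun _ : ℕ => ℝ) i) := fun n => unif (c n) ε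

lemma lmarginal_state (n l : ℕ) {W : (ℕ → ℝ) → ℝ≥0∞} (hW : Measurable W)
    (hdep : ∀ v w : ℕ → ℝ, (∀ i < n, v i = w i) → W v = W w) {h : ℝ × ℝ → ℝ≥0∞}
    (hh : Measurable h) :
    lmarginal (noise c ε) (Ico n (n + l)) (fun w => W w * h (state σ w E (n + l))) v =
      W v * iterAvg E ε c n l h (state σ v E n) := by
  induction l generalizing n v with
  | zero => simp [iterAvg]
  | succ l ih =>
    have hsplit : Finset.Ico n (n + (l + 1)) = insert n (Finset.Ico (n + 1) (n + 1 + l)) := by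
      ext i
      simp only [Finset.mem_Ico, Finset.mem_insert]
      omega
    have hupdate : ∀ a, ∀ i < n, Function.update v n a i = v i := fun a i hi =>
      Function.update_of_ne hi.ne _ _
    have hstate : ∀ a, state σ (Function.update v n a) E (n + 1) =
        transfer (E - a) (state σ v E n) := by
      intro a
      rw [state_succ, state_congr (hupdate a), Function.update_self]
    rw [hsplit, lmarginal_insert _ (by fun_prop) (by simp), iterAvg, avgStep,
      ← lintegral_const_mul _ (measurable_comp_transfer_sub (measurable_iterAvg _ _ hh) _ _)]
    refine lintegral_congr fun a => ?_
    rw [← hstate, ← hdep _ _ (hupdate a), ← ih (n + 1) fun v w hvw => hdep v w fun i hi =>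
      hvw i (hi.trans n.lt_succ_self), add_right_comm, add_assoc]

lemma lmarginal_lintegral (s : Finset ℕ) (ν : Measure ℝ) [SFinite ν]
    {Φ : (ℕ → ℝ) → ℝ → ℝ≥0∞} (hΦ : Measurable (Function.uncurry Φ)) :
    lmarginal (noise c ε) s (fun w => ∫⁻ E, Φ w E ∂ν) v =
      ∫⁻ E, lmarginal (noise c ε) s (fun w => Φ w E) v ∂ν := by
  unfold lmarginal
  refine lintegral_lintegral_swap (Measurable.aemeasurable ?_)
  exact hΦ.comp ((measurable_updateFinset.comp measurable_fst).prodMk measurable_snd)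

lemma lmarginal_sum {ι : Type*} (s : Finset ℕ) (t : Finset ι) {F : ι → (ℕ → ℝ) → ℝ≥0∞}
    (hF : ∀ i ∈ t, Measurable (F i)) :
    lmarginal (noise c ε) s (fun w => ∑ i ∈ t, F i w) v =
      ∑ i ∈ t, lmarginal (noise c ε) s (F i) v :=
  lintegral_finsetSum _ fun i hi => (hF i hi).comp measurable_updateFinset

lemma lmarginal_frac_mul_le (hε : 0 < ε) (hE : ∀ n, |E - c n| + ε ≤ B) {m n : ℕ} (hmn : m ≤ n)
    (l : ℕ) :
    lmarginal (noise c ε) (Ico n (n + l))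
        (fun w => ENNReal.ofReal (frac σ w E m n) * ‖state σ w E (n + l)‖ₑ⁻¹ ^ 2) v ≤
      decayConst ε B ^ 2 * (ENNReal.ofReal (frac σ v E m n) * ‖state σ v E n‖ₑ⁻¹ ^ 2) := by
  rw [lmarginal_state n l (W := fun w => ENNReal.ofReal (frac σ w E m n)) (by fun_prop)
    (fun v w hvw => by rw [frac_congr hmn hvw]) (h := fun x => ‖x‖ₑ⁻¹ ^ 2) (by fun_prop),
    mul_left_comm]
  gcongr
  exact iterAvg_inv_enorm_sq_le hε hE n l (state_ne_zero n)

lemma lmarginal_solNormInv_mul_le (hε : 0 < ε) (hE : ∀ n, |E - c n| + ε ≤ B) (n l : ℕ) :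
    lmarginal (noise c ε) (Ico n (n + l))
        (fun w => solNormInv σ w E n * ‖state σ w E (n + l)‖ₑ⁻¹) v ≤
      decay ε B l * (solNormInv σ v E n * ‖state σ v E n‖ₑ⁻¹) := by
  rw [lmarginal_state n l (W := fun w => solNormInv σ w E n) (by fun_prop)
    (fun v w hvw => solNormInv_congr hvw) (h := fun x => ‖x‖ₑ⁻¹) (by fun_prop), mul_left_comm]
  gcongr
  exact iterAvg_inv_enorm_le hε hE n l (state_ne_zero n)

lemma lmarginal_solNormInv_succ_mul_le (hε : 0 < ε) (hE : ∀ n, |E - c n| + ε ≤ B) (n l : ℕ) :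
    lmarginal (noise c ε) (Ico n (n + l))
        (fun w => solNormInv σ w E (n + l) * ‖state σ w E (n + l)‖ₑ⁻¹) v ≤
      decay ε B l * (solNormInv σ v E n * ‖state σ v E n‖ₑ⁻¹) := by
  refine (lmarginal_mono (fun w => ?_) v).trans (lmarginal_solNormInv_mul_le hε hE n l)
  beta_reduce
  gcongr
  exact solNormInv_anti (Nat.le_add_right n l)

lemma lmarginal_solNormInv_mul_enorm_le (hε : 0 < ε) (hE : ∀ n, |E - c n| + ε ≤ B) (n m k : ℕ) :
    lmarginal (noise c ε) (Ico n (n + m + k))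
        (fun w => solNormInv σ w E n * ‖state σ w E (n + m)‖ₑ *
          ‖state σ w E (n + m + k)‖ₑ⁻¹ ^ 2) v ≤
      decayConst ε B ^ 2 * decay ε B m * (solNormInv σ v E n * ‖state σ v E n‖ₑ⁻¹) := by
  have hsplit : Finset.Ico n (n + m + k) =
      Finset.Ico n (n + m) ∪ Finset.Ico (n + m) (n + m + k) := by
    rw [Finset.Ico_union_Ico_eq_Ico] <;> omega
  have hinner : ∀ w : ℕ → ℝ, lmarginal (noise c ε) (Finset.Ico (n + m) (n + m + k))
      (fun w => solNormInv σ w E n * ‖state σ w E (n + m)‖ₑ * ‖state σ w E (n + m + k)‖ₑ⁻¹ ^ 2) w ≤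
      decayConst ε B ^ 2 * (solNormInv σ w E n * ‖state σ w E (n + m)‖ₑ⁻¹) := by
    intro w
    rw [lmarginal_state (n + m) k (W := fun w => solNormInv σ w E n * ‖state σ w E (n + m)‖ₑ)
      (by fun_prop)
      (fun v w hvw => by rw [solNormInv_congr fun i hi => hvw i (by omega), state_congr hvw])
      (h := fun x => ‖x‖ₑ⁻¹ ^ 2) (by fun_prop)]
    calc _ ≤ solNormInv σ w E n * ‖state σ w E (n + m)‖ₑ *
          (decayConst ε B ^ 2 * ‖state σ w E (n + m)‖ₑ⁻¹ ^ 2) := by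
          gcongr
          exact iterAvg_inv_enorm_sq_le hε hE (n + m) k (state_ne_zero _)
      _ = decayConst ε B ^ 2 * (solNormInv σ w E n * ‖state σ w E (n + m)‖ₑ⁻¹) *
          (‖state σ w E (n + m)‖ₑ * ‖state σ w E (n + m)‖ₑ⁻¹) := by ring
      _ = _ := by rw [ENNReal.mul_inv_cancel (by simp [state_ne_zero]) enorm_ne_top, mul_one]
  rw [hsplit, lmarginal_union _ _ (by fun_prop) (Finset.Ico_disjoint_Ico_consecutive _ _ _)]
  calc _ ≤ lmarginal (noise c ε) (Finset.Ico n (n + m))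
        (fun w => decayConst ε B ^ 2 * (solNormInv σ w E n * ‖state σ w E (n + m)‖ₑ⁻¹)) v :=
        lmarginal_mono hinner v
    _ = decayConst ε B ^ 2 * lmarginal (noise c ε) (Finset.Ico n (n + m))
        (fun w => solNormInv σ w E n * ‖state σ w E (n + m)‖ₑ⁻¹) v :=
        lintegral_const_mul' _ _ (by finiteness [decayConst_ne_top hε B])
    _ ≤ _ := by
        rw [mul_assoc]
        gcongr
        exact lmarginal_solNormInv_mul_le hε hE n m

lemma lmarginal_frac_add_mul_le (hε : 0 < ε) (hE : ∀ n, |E - c n| + ε ≤ B) (n l : ℕ) :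
    lmarginal (noise c ε) (Ico n (n + l))
        (fun w => ENNReal.ofReal (frac σ w E n (n + l)) * ‖state σ w E (n + l)‖ₑ⁻¹ ^ 2) v ≤
      decayConst ε B ^ 2 * (∑' j, decay ε B j) * (solNormInv σ v E n * ‖state σ v E n‖ₑ⁻¹) := by
  calc _ ≤ lmarginal (noise c ε) (Ico n (n + l)) (fun w => ∑ j ∈ range l,
        solNormInv σ w E n * ‖state σ w E (n + (j + 1))‖ₑ * ‖state σ w E (n + l)‖ₑ⁻¹ ^ 2) v := by
        refine lmarginal_mono (fun w => ?_) v
        rw [← sum_mul]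
        beta_reduce
        gcongr
        exact frac_le n l
    _ = ∑ j ∈ range l, lmarginal (noise c ε) (Ico n (n + l)) (fun w =>
        solNormInv σ w E n * ‖state σ w E (n + (j + 1))‖ₑ * ‖state σ w E (n + l)‖ₑ⁻¹ ^ 2) v :=
        lmarginal_sum _ _ fun j _ => by fun_prop
    _ ≤ ∑ j ∈ range l, decayConst ε B ^ 2 * decay ε B (j + 1) *
          (solNormInv σ v E n * ‖state σ v E n‖ₑ⁻¹) := by
        refine sum_le_sum fun j hj => ?_
        obtain ⟨k, rfl⟩ := Nat.exists_eq_add_of_lt (Finset.mem_range.1 hj)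
        rw [add_right_comm j k 1, ← add_assoc n (j + 1) k]
        exact lmarginal_solNormInv_mul_enorm_le hε hE n (j + 1) k
    _ ≤ _ := by
        rw [← sum_mul, ← mul_sum]
        gcongr
        exact (ENNReal.sum_le_tsum _).trans
          (ENNReal.tsum_comp_le_tsum_of_injective (add_left_injective 1) _)

end Marginal

/-! ### Continuation of a potential -/

section Continuation

/-- Lebesgue measure on the energy window `[-3, 3]`, which contains the spectrum of every discrete
Schrödinger operator whose potential is bounded by one. -/
def window : Measure ℝ := volume.restrict (Icc (-3) 3)

instance : IsFiniteMeasure window := by unfold window; infer_instance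

/-- The energy average of `frac σ v E m n`, weighted as the density of states of the box
`0, …, k - 1` averaged over the next potential value. -/
def fracInt (σ : ℝ) (v : ℕ → ℝ) (m n k : ℕ) : ℝ≥0∞ :=
  ∫⁻ E, ENNReal.ofReal (frac σ v E m n) * ‖state σ v E k‖ₑ⁻¹ ^ 2 ∂window

/-- The quantity that controls how much a continuation of the first `n` potential values adds to
`fracInt`. -/
def tailInt (σ : ℝ) (v : ℕ → ℝ) (n : ℕ) : ℝ≥0∞ :=
  ∫⁻ E, solNormInv σ v E n * ‖state σ v E n‖ₑ⁻¹ ∂window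

variable {c v w : ℕ → ℝ} {ε : ℝ}

lemma fracInt_congr {σ : ℝ} {m n k : ℕ} (hmn : m ≤ n) (hnk : n ≤ k) (h : ∀ i < k, v i = w i) :
    fracInt σ v m n k = fracInt σ w m n k :=
  lintegral_congr fun E => by
    rw [frac_congr hmn fun i hi => h i (hi.trans_le hnk), state_congr h]

lemma tailInt_congr {σ : ℝ} {n : ℕ} (h : ∀ i < n, v i = w i) : tailInt σ v n = tailInt σ w n :=
  lintegral_congr fun E => by rw [solNormInv_congr h, state_congr h]

lemma fracInt_self (σ : ℝ) (v : ℕ → ℝ) (m k : ℕ) : fracInt σ v m m k = 0 := by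
  simp [fracInt, frac_self]

lemma tailInt_zero_ne_top (σ : ℝ) (v : ℕ → ℝ) : tailInt σ v 0 ≠ ∞ := by
  refine ne_top_of_le_ne_top (b := ∫⁻ _, 1 * 1 ∂window) (by simp) (lintegral_mono fun E => ?_)
  refine mul_le_mul' ?_ ?_
  · exact ENNReal.inv_le_one.2 (ENNReal.one_le_ofReal.2 (Real.one_le_sqrt.2 (one_le_sumSq 0)))
  · rw [ENNReal.inv_le_one, ← ofReal_norm, ENNReal.one_le_ofReal]
    simp [state]

@[fun_prop]
lemma measurable_fracInt (σ : ℝ) (m n k : ℕ) : Measurable fun w => fracInt σ w m n k :=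
  Measurable.lintegral_prod_right' (f := fun p : (ℕ → ℝ) × ℝ =>
    ENNReal.ofReal (frac σ p.1 p.2 m n) * ‖state σ p.1 p.2 k‖ₑ⁻¹ ^ 2) (by fun_prop)

@[fun_prop]
lemma measurable_tailInt (σ : ℝ) (n : ℕ) : Measurable fun w => tailInt σ w n :=
  Measurable.lintegral_prod_right' (f := fun p : (ℕ → ℝ) × ℝ =>
    solNormInv σ p.1 p.2 n * ‖state σ p.1 p.2 n‖ₑ⁻¹) (by fun_prop)

lemma lmarginal_sum_lintegral_window_le {ι : Type*} (S : Finset ι) (s : Finset ℕ)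
    {Φ : ι → (ℕ → ℝ) → ℝ → ℝ≥0∞} (hΦ : ∀ i, Measurable (Function.uncurry (Φ i)))
    {Ψ : ι → ℝ → ℝ≥0∞} {K : ℝ≥0∞} (hK : K ≠ ∞)
    (h : ∀ i, ∀ E ∈ Icc (-3 : ℝ) 3, lmarginal (noise c ε) s (fun w => Φ i w E) v ≤ K * Ψ i E) :
    lmarginal (noise c ε) s (fun w => ∑ i ∈ S, ∫⁻ E, Φ i w E ∂window) v ≤
      K * ∑ i ∈ S, ∫⁻ E, Ψ i E ∂window := by
  rw [lmarginal_sum s S (F := fun i w => ∫⁻ E, Φ i w E ∂window)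
    fun i _ => (hΦ i).lintegral_prod_right', mul_sum]
  refine sum_le_sum fun i _ => ?_
  rw [lmarginal_lintegral s window (hΦ i), ← lintegral_const_mul' _ _ hK]
  exact setLIntegral_mono_ae' measurableSet_Icc (ae_of_all _ (h i))

lemma abs_sub_add_le_four {E : ℝ} (hE : E ∈ Icc (-3 : ℝ) 3) (hε : ε ≤ 1 / 2)
    (hv : ∀ n, |v n| ≤ 1 / 2) (n : ℕ) : |E - v n| + ε ≤ 4 := by
  have hE3 : |E| ≤ 3 := abs_le.2 hE
  linarith [abs_sub E (v n), hv n]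

lemma lmarginal_sum_fracInt_le (hε : 0 < ε) (hε2 : ε ≤ 1 / 2) (hv : ∀ n, |v n| ≤ 1 / 2)
    {m n : ℕ} (hmn : m ≤ n) (l : ℕ) (S : Finset ℝ) :
    lmarginal (noise v ε) (Ico n (n + l)) (fun w => ∑ σ ∈ S, fracInt σ w m n (n + l)) v ≤
      decayConst ε 4 ^ 2 * ∑ σ ∈ S, fracInt σ v m n n :=
  lmarginal_sum_lintegral_window_le S _ (fun σ => by unfold Function.uncurry; fun_prop)
    (by finiteness [decayConst_ne_top hε 4])
    fun σ E hE => lmarginal_frac_mul_le hε (abs_sub_add_le_four hE hε2 hv) hmn l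

lemma lmarginal_sum_fracInt_add_le (hε : 0 < ε) (hε2 : ε ≤ 1 / 2) (hv : ∀ n, |v n| ≤ 1 / 2)
    (n l : ℕ) (S : Finset ℝ) :
    lmarginal (noise v ε) (Ico n (n + l)) (fun w => ∑ σ ∈ S, fracInt σ w n (n + l) (n + l)) v ≤
      decayConst ε 4 ^ 2 * (∑' j, decay ε 4 j) * ∑ σ ∈ S, tailInt σ v n :=
  lmarginal_sum_lintegral_window_le S _ (fun σ => by unfold Function.uncurry; fun_prop)
    (by finiteness [decayConst_ne_top hε 4, tsum_decay_ne_top hε 4])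
    fun σ E hE => lmarginal_frac_add_mul_le hε (abs_sub_add_le_four hE hε2 hv) n l

lemma lmarginal_sum_tailInt_le (hε : 0 < ε) (hε2 : ε ≤ 1 / 2) (hv : ∀ n, |v n| ≤ 1 / 2)
    (n l : ℕ) (S : Finset ℝ) :
    lmarginal (noise v ε) (Ico n (n + l)) (fun w => ∑ σ ∈ S, tailInt σ w (n + l)) v ≤
      decay ε 4 l * ∑ σ ∈ S, tailInt σ v n :=
  lmarginal_sum_lintegral_window_le S _ (fun σ => by unfold Function.uncurry; fun_prop)
    (ENNReal.ne_top_of_tsum_ne_top (tsum_decay_ne_top hε 4) l)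
    fun σ E hE => lmarginal_solNormInv_succ_mul_le hε (abs_sub_add_le_four hE hε2 hv) n l

lemma measure_lt_le_inv_of_mul_lintegral_le {Ω : Type*} [MeasurableSpace Ω] {P : Measure Ω}
    {X : Ω → ℝ≥0∞} (hX : AEMeasurable X P) {K τ : ℝ≥0∞} (hτ : τ ≠ 0)
    (h : K * ∫⁻ y, X y ∂P ≤ τ) : P {y | τ < X y} ≤ K⁻¹ := by
  obtain rfl | hτ' := eq_or_ne τ ∞
  · simp
  calc P {y | τ < X y} ≤ P {y | τ ≤ X y} := measure_mono fun y (hy : τ < X y) => hy.le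
    _ ≤ (∫⁻ y, X y ∂P) / τ := meas_ge_le_lintegral_div hX hτ hτ'
    _ ≤ K⁻¹ := by
      rw [ENNReal.div_le_iff hτ hτ', mul_comm, ← div_eq_mul_inv,
        ENNReal.le_div_iff_mul_le (Or.inr hτ) (Or.inr hτ'), mul_comm]
      exact h

lemma exists_forall_le_of_lmarginal_le {ι : Type*} [Fintype ι] (hε : 0 < ε) (s : Finset ℕ)
    {X : ι → (ℕ → ℝ) → ℝ≥0∞} (hX : ∀ i, Measurable (X i)) {τ : ι → ℝ≥0∞} (hτ : ∀ i, τ i ≠ 0)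
    (h : ∀ i, (Fintype.card ι + 1 : ℕ) * lmarginal (noise c ε) s (X i) v ≤ τ i) :
    ∃ w : ℕ → ℝ, (∀ i ∉ s, w i = v i) ∧ (∀ i ∈ s, |w i - c i| ≤ ε) ∧ ∀ i, X i w ≤ τ i := by
  have hprob : ∀ i, IsProbabilityMeasure (noise c ε i) :=
    fun i => isProbabilityMeasure_unif (c i) hε
  set P := Measure.pi fun i : s => noise c ε i
  have hmem : ∀ᵐ y ∂P, ∀ i : s, y i ∈ Icc (c i - ε) (c i + ε) := ae_all_iff.2 fun i =>
    (Measure.quasiMeasurePreserving_eval (fun i : s => noise c ε i) i).ae (ae_unif_mem (c i) ε)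
  have hbad : P (⋃ i, {y | τ i < X i (Function.updateFinset v s y)}) < P univ :=
    calc _ ≤ ∑ i, P {y | τ i < X i (Function.updateFinset v s y)} := measure_iUnion_fintype_le _ _
      _ ≤ ∑ _ : ι, ((Fintype.card ι + 1 : ℕ) : ℝ≥0∞)⁻¹ := sum_le_sum fun i _ =>
        measure_lt_le_inv_of_mul_lintegral_le
          ((hX i).comp measurable_updateFinset).aemeasurable (hτ i) (h i)
      _ < P univ := by
        rw [sum_const, nsmul_eq_mul, card_univ, measure_univ, ← div_eq_mul_inv,
          ENNReal.div_lt_iff (by simp) (by simp), one_mul]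
        exact_mod_cast Nat.lt_succ_self _
  obtain ⟨y, hy, hyX⟩ : ∃ y, (∀ i : s, y i ∈ Icc (c i - ε) (c i + ε)) ∧
      ∀ i, X i (Function.updateFinset v s y) ≤ τ i := by
    by_contra! hcon
    refine hbad.not_ge (measure_mono_ae ?_)
    filter_upwards [hmem] with y hy _
    exact mem_iUnion.2 (hcon y hy)
  refine ⟨_, fun i hi => by simp [Function.updateFinset, hi], fun i hi => ?_, hyX⟩
  have := hy ⟨i, hi⟩
  simp only [Function.updateFinset, hi, dif_pos]
  rw [abs_le]
  constructor <;> linarith [this.1, this.2]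

lemma exists_mul_decay_mul_le (hε : 0 < ε) (B : ℝ) {K x τ : ℝ≥0∞} (hK : K ≠ ∞) (hx : x ≠ ∞)
    (hτ : τ ≠ 0) (L : ℕ) : ∃ l ≥ L, K * (decay ε B l * x) ≤ τ := by
  have hlim : Filter.Tendsto (fun l => K * (decay ε B l * x)) Filter.atTop (𝓝 0) := by
    have hdecay := ENNReal.tendsto_atTop_zero_of_tsum_ne_top (tsum_decay_ne_top hε B)
    simpa using ENNReal.Tendsto.const_mul (ENNReal.Tendsto.mul_const hdecay (Or.inr hx)) (Or.inr hK)
  obtain ⟨l, hl, hlL⟩ := ((hlim.eventually_le_const (pos_iff_ne_zero.2 hτ)).and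
    (Filter.eventually_ge_atTop L)).exists
  exact ⟨l, hlL, hl⟩

theorem exists_continuation (hε : 0 < ε) (hε2 : ε ≤ 1 / 2) (hv : ∀ n, |v n| ≤ 1 / 2) {m n : ℕ}
    (hmn : m ≤ n) (S : Finset ℝ) (htail : ∑ σ ∈ S, tailInt σ v n ≠ ∞) {τ₁ τ₂ τ₃ : ℝ≥0∞}
    (hτ₁ : τ₁ ≠ 0) (hτ₂ : τ₂ ≠ 0) (hτ₃ : τ₃ ≠ 0)
    (h₁ : 4 * (decayConst ε 4 ^ 2 * ∑ σ ∈ S, fracInt σ v m n n) ≤ τ₁)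
    (h₂ : 4 * (decayConst ε 4 ^ 2 * (∑' j, decay ε 4 j) * ∑ σ ∈ S, tailInt σ v n) ≤ τ₂) (L : ℕ) :
    ∃ l ≥ L, ∃ w : ℕ → ℝ, (∀ i ∉ Finset.Ico n (n + l), w i = v i) ∧
      (∀ i ∈ Finset.Ico n (n + l), |w i - v i| ≤ ε) ∧
      ∑ σ ∈ S, fracInt σ w m n (n + l) ≤ τ₁ ∧
      ∑ σ ∈ S, fracInt σ w n (n + l) (n + l) ≤ τ₂ ∧
      ∑ σ ∈ S, tailInt σ w (n + l) ≤ τ₃ := by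
  obtain ⟨l, hlL, h₃⟩ := exists_mul_decay_mul_le hε 4 (K := 4) (by simp) htail hτ₃ L
  have hmean₁ := (mul_le_mul_right (lmarginal_sum_fracInt_le hε hε2 hv hmn l S) 4).trans h₁
  have hmean₂ := (mul_le_mul_right (lmarginal_sum_fracInt_add_le hε hε2 hv n l S) 4).trans h₂
  have hmean₃ := (mul_le_mul_right (lmarginal_sum_tailInt_le hε hε2 hv n l S) 4).trans h₃
  obtain ⟨w, hw, hwε, hX⟩ := exists_forall_le_of_lmarginal_le (X := ![
      fun w => ∑ σ ∈ S, fracInt σ w m n (n + l),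
      fun w => ∑ σ ∈ S, fracInt σ w n (n + l) (n + l),
      fun w => ∑ σ ∈ S, tailInt σ w (n + l)]) (τ := ![τ₁, τ₂, τ₃]) hε (Finset.Ico n (n + l))
    (fun i => by fin_cases i <;> simp only [Fin.reduceFinMk, Matrix.cons_val] <;> fun_prop)
    (fun i => by fin_cases i; exacts [hτ₁, hτ₂, hτ₃])
    (fun i => by fin_cases i <;> norm_num; exacts [hmean₁, hmean₂, hmean₃])
  exact ⟨l, hlL, w, hw, hwε, hX 0, hX 1, hX 2⟩

end Continuation

/-! ### Spectral measures of box operators -/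

section Box

variable {σ : ℝ} {v w : ℕ → ℝ} {N : ℕ}

/-- The restriction of the operator to the sites `0, …, N - 1`, with the boundary condition
`ψ(-1) = σ ψ(0)` on the left and a Dirichlet condition on the right. -/
def boxMatrix (σ : ℝ) (v : ℕ → ℝ) (N : ℕ) : Matrix (Fin N) (Fin N) ℝ := fun n k =>
  ((if (k : ℕ) = n + 1 then 1 else 0) + if (k : ℕ) + 1 = n then 1 else 0) +
    if (k : ℕ) = n then v n + (if (n : ℕ) = 0 then σ else 0) else 0

lemma boxMatrix_isHermitian (σ : ℝ) (v : ℕ → ℝ) (N : ℕ) : (boxMatrix σ v N).IsHermitian := by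
  ext n k
  simp only [Matrix.conjTranspose_apply, boxMatrix, star_trivial]
  grind

/-- Extension by zero of a vector on a box. -/
def extendZero (u : Fin N → ℝ) (n : ℕ) : ℝ := if h : n < N then u ⟨n, h⟩ else 0

lemma extendZero_coe (u : Fin N → ℝ) (n : Fin N) : extendZero u n = u n := by
  simp [extendZero]

lemma sum_ite_eq_extendZero (u : Fin N → ℝ) (m : ℕ) :
    ∑ k : Fin N, (if (k : ℕ) = m then u k else 0) = extendZero u m := by
  unfold extendZero
  split_ifs with h
  · simp [show ∀ k : Fin N, (k : ℕ) = m ↔ k = ⟨m, h⟩ from fun k => by simp [Fin.ext_iff]]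
  · exact sum_eq_zero fun k _ => if_neg (by have := k.2; omega)

lemma boxMatrix_mulVec (u : Fin N → ℝ) (n : Fin N) :
    (boxMatrix σ v N).mulVec u n = extendZero u (n + 1) +
      (if (n : ℕ) = 0 then σ * u n else extendZero u (n - 1)) + v n * u n := by
  have hleft : ∑ k : Fin N, (if (k : ℕ) + 1 = n then u k else 0) =
      if (n : ℕ) = 0 then 0 else extendZero u (n - 1) := by
    split_ifs with h
    · exact sum_eq_zero fun k _ => if_neg (by omega)
    · rw [← sum_ite_eq_extendZero]
      exact sum_congr rfl fun k _ => by simp only [show (k : ℕ) + 1 = n ↔ (k : ℕ) = n - 1 by omega]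
  have hdiag := sum_ite_eq_extendZero (fun k => (v n + if (n : ℕ) = 0 then σ else 0) * u k) n
  rw [extendZero_coe] at hdiag
  simp only [Matrix.mulVec, dotProduct, boxMatrix, add_mul, ite_mul, one_mul, zero_mul,
    sum_add_distrib, sum_ite_eq_extendZero, hleft] at hdiag ⊢
  rw [hdiag]
  split_ifs <;> ring

variable {u : Fin N → ℝ} {e : ℝ}

lemma extendZero_eq_mul_sol (h : (boxMatrix σ v N).mulVec u = e • u) {n : ℕ} (hn : n ≤ N) :
    extendZero u n = extendZero u 0 * sol σ v e (n + 1) := by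
  have row : ∀ n < N, extendZero u (n + 1) + (if n = 0 then σ * extendZero u n
      else extendZero u (n - 1)) + v n * extendZero u n = e * extendZero u n := by
    intro n hn
    have := congrFun h ⟨n, hn⟩
    rw [boxMatrix_mulVec, ← extendZero_coe u] at this
    simpa [← extendZero_coe u] using this
  induction n using Nat.twoStepInduction with
  | zero => simp
  | one =>
    have := row 0 hn
    simp only [if_true] at this
    rw [sol_add_two, sol_one, sol_zero]
    linarith
  | more n ih1 ih2 =>
    have := row (n + 1) hn
    rw [if_neg (by omega), Nat.add_sub_cancel, ih1 (by omega), ih2 (by omega)] at this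
    rw [sol_add_two]
    linarith

lemma abs_le_three_of_mulVec_eq (hσ : |σ| ≤ 1) (hv : ∀ n < N, |v n| ≤ 1)
    (h : (boxMatrix σ v N).mulVec u = e • u) (hu : u ≠ 0) : |e| ≤ 3 := by
  obtain ⟨i, hi⟩ := Function.ne_iff.1 hu
  have : Nonempty (Fin N) := ⟨i⟩
  obtain ⟨n, hn⟩ := Finite.exists_max fun n => |u n|
  have hpos : 0 < |u n| := (abs_pos.2 hi).trans_le (hn i)
  have hext : ∀ m, |extendZero u m| ≤ |u n| := by
    intro m
    unfold extendZero
    split_ifs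
    · exact hn _
    · simp
  have hleft : |if (n : ℕ) = 0 then σ * u n else extendZero u (n - 1)| ≤ |u n| := by
    split_ifs
    · rw [abs_mul]
      exact mul_le_of_le_one_left hpos.le hσ
    · exact hext _
  have hdiag : |v n * u n| ≤ |u n| := by
    rw [abs_mul]
    exact mul_le_of_le_one_left hpos.le (hv n n.2)
  have row := congrFun h n
  rw [boxMatrix_mulVec, Pi.smul_apply, smul_eq_mul] at row
  refine le_of_mul_le_mul_right ?_ hpos
  calc |e| * |u n| = |extendZero u (n + 1) +
        (if (n : ℕ) = 0 then σ * u n else extendZero u (n - 1)) + v n * u n| := by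
        rw [row, abs_mul]
    _ ≤ 3 * |u n| := (abs_add_three _ _ _).trans (by linarith [hext (n + 1)])

/-- The sum of squares of the solution over the sites `0, …, N - 1`. -/
def boxMass (σ : ℝ) (v : ℕ → ℝ) (E : ℝ) (N : ℕ) : ℝ := ∑ j ∈ range N, sol σ v E (j + 1) ^ 2

lemma boxMass_succ_pos (σ : ℝ) (v : ℕ → ℝ) (E : ℝ) (N : ℕ) : 0 < boxMass σ v E (N + 1) := by
  rw [boxMass, sum_range_succ', zero_add, sol_one]
  positivity

lemma exists_orthogonal_eigenvectors {ι : Type*} [Fintype ι] [DecidableEq ι] {A : Matrix ι ι ℝ}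
    (hA : A.IsHermitian) :
    ∃ (e : ι → ℝ) (U : Matrix ι ι ℝ), U ∈ Matrix.orthogonalGroup ι ℝ ∧
      ∀ i, A.mulVec (U i) = e i • U i :=
  ⟨hA.eigenvalues, star hA.eigenvectorUnitary.1, Unitary.star_mem hA.eigenvectorUnitary.2,
    hA.mulVec_eigenvectorBasis⟩

theorem exists_box_quadrature (hσ : |σ| ≤ 1) (hv : ∀ n < N, |v n| ≤ 1) :
    ∃ e : Fin N → ℝ, Function.Injective e ∧ (∀ i, sol σ v (e i) (N + 1) = 0) ∧ (∀ i, |e i| ≤ 3) ∧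
      ∀ n < N, ∀ k < N, ∑ i, (boxMass σ v (e i) N)⁻¹ *
        (sol σ v (e i) (n + 1) * sol σ v (e i) (k + 1)) = if n = k then 1 else 0 := by
  obtain ⟨e, U, hU, heig⟩ := exists_orthogonal_eigenvectors (boxMatrix_isHermitian σ v N)
  set c : Fin N → ℝ := fun i => extendZero (U i) 0
  have hval : ∀ i (n : Fin N), U i n = c i * sol σ v (e i) (n + 1) := fun i n => by
    rw [← extendZero_coe (U i) n, extendZero_eq_mul_sol (heig i) n.2.le]
  have hrow : ∀ i j, e i = e j → c i * c j * boxMass σ v (e i) N = if i = j then 1 else 0 := by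
    intro i j hij
    have := congrFun (congrFun ((Matrix.mem_orthogonalGroup_iff _ _).1 hU) i) j
    rw [Matrix.mul_apply, Matrix.one_apply] at this
    rw [← this, boxMass, mul_sum, ← Fin.sum_univ_eq_sum_range
      (fun m => c i * c j * sol σ v (e i) (m + 1) ^ 2)]
    refine sum_congr rfl fun n _ => ?_
    rw [Matrix.transpose_apply, hval, hval, ← hij]
    ring
  have hnorm : ∀ i, c i ^ 2 * boxMass σ v (e i) N = 1 := fun i => by
    rw [sq, hrow i i rfl, if_pos rfl]
  have hc : ∀ i, c i ≠ 0 := fun i h0 => by simpa [h0] using hnorm i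
  refine ⟨e, fun i j hij => ?_, fun i => ?_, fun i => ?_, fun n hn k hk => ?_⟩
  · by_contra hne
    have h0 := hrow i j hij
    rw [if_neg hne] at h0
    exact mul_ne_zero (mul_ne_zero (hc i) (hc j)) (right_ne_zero_of_mul_eq_one (hnorm i)) h0
  · have := extendZero_eq_mul_sol (heig i) le_rfl
    rw [extendZero, dif_neg (lt_irrefl _)] at this
    exact (mul_eq_zero.1 this.symm).resolve_left (hc i)
  · refine abs_le_three_of_mulVec_eq hσ hv (heig i) fun h0 => hc i ?_
    simp [c, h0, extendZero]
  · have hcol := congrFun (congrFun ((Matrix.mem_orthogonalGroup_iff' _ _).1 hU) ⟨n, hn⟩)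
      ⟨k, hk⟩
    rw [Matrix.mul_apply, Matrix.one_apply] at hcol
    simp only [Fin.mk.injEq] at hcol
    rw [← hcol]
    refine sum_congr rfl fun i _ => ?_
    rw [Matrix.transpose_apply, hval, hval, inv_eq_of_mul_eq_one_left (hnorm i)]
    ring

/-- `μ` is a probability measure on `[-3, 3]` for which the values of the solution at the sites
`n < N`, as functions of the energy, are orthonormal. For `N = ⊤` this is the spectral measure of
the half-line operator at the site `0`, and for finite `N` box operators provide examples. -/
structure IsSpectralMeasure (σ : ℝ) (v : ℕ → ℝ) (N : ℕ∞) (μ : Measure ℝ) : Prop where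
  isProbabilityMeasure : IsProbabilityMeasure μ
  ae_mem : ∀ᵐ E ∂μ, E ∈ Icc (-3 : ℝ) 3
  orthonormal : ∀ n k : ℕ, n < N → k < N →
    ∫ E, sol σ v E (n + 1) * sol σ v E (k + 1) ∂μ = if n = k then 1 else 0

lemma IsSpectralMeasure.congr {μ : Measure ℝ} (hμ : IsSpectralMeasure σ v (N + 1) μ)
    (h : ∀ i < N, v i = w i) : IsSpectralMeasure σ w (N + 1) μ where
  __ := hμ
  orthonormal n k hn hk := by
    rw [← hμ.orthonormal n k hn hk]
    norm_cast at hn hk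
    refine integral_congr_ae (ae_of_all _ fun E => ?_)
    simp only [sol_congr (v := v) (w := w) (n := n + 1) fun i hi => h i (by omega),
      sol_congr (v := v) (w := w) (n := k + 1) fun i hi => h i (by omega)]

lemma IsSpectralMeasure.integrable {μ : Measure ℝ} {N : ℕ∞} (hμ : IsSpectralMeasure σ v N μ)
    {f : ℝ → ℝ} (hf : Continuous f) : Integrable f μ := by
  have := hμ.isProbabilityMeasure
  rw [← Measure.restrict_eq_self_of_ae_mem hμ.ae_mem]
  exact hf.continuousOn.integrableOn_compact isCompact_Icc

/-- The measure with the weights of the box `0, …, N - 1` at the nodes `e i`. -/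
def boxMeasure (σ : ℝ) (v : ℕ → ℝ) (e : Fin N → ℝ) : Measure ℝ :=
  ∑ i, ENNReal.ofReal (boxMass σ v (e i) N)⁻¹ • Measure.dirac (e i)

lemma integral_boxMeasure (e : Fin (N + 1) → ℝ) (f : ℝ → ℝ) :
    ∫ E, f E ∂boxMeasure σ v e = ∑ i, (boxMass σ v (e i) (N + 1))⁻¹ * f (e i) := by
  rw [boxMeasure, integral_finsetSum_measure fun i _ =>
    (integrable_dirac enorm_lt_top).smul_measure ENNReal.ofReal_ne_top]
  refine sum_congr rfl fun i _ => ?_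
  rw [integral_smul_measure, integral_dirac,
    ENNReal.toReal_ofReal (inv_pos.2 (boxMass_succ_pos _ _ _ _)).le, smul_eq_mul]

lemma lintegral_boxMeasure (e : Fin (N + 1) → ℝ) (F : ℝ → ℝ≥0∞) :
    ∫⁻ E, F E ∂boxMeasure σ v e =
      ∑ i, F (e i) / ENNReal.ofReal (boxMass σ v (e i) (N + 1)) := by
  rw [boxMeasure, lintegral_finsetSum_measure]
  refine sum_congr rfl fun i _ => ?_
  rw [lintegral_smul_measure, lintegral_dirac, smul_eq_mul, mul_comm, div_eq_mul_inv,
    ENNReal.ofReal_inv_of_pos (boxMass_succ_pos _ _ _ _)]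

theorem exists_isSpectralMeasure_boxMeasure (hσ : |σ| ≤ 1) (hv : ∀ n ≤ N, |v n| ≤ 1) :
    ∃ e : Fin (N + 1) → ℝ, Function.Injective e ∧
      (∀ i, |e i| ≤ 3 ∧ (e i - v N) * sol σ v (e i) (N + 1) - sol σ v (e i) N = 0) ∧
      IsSpectralMeasure σ v (N + 1) (boxMeasure σ v e) := by
  obtain ⟨e, hinj, hroot, he, horth⟩ := exists_box_quadrature (N := N + 1) hσ
    fun n hn => hv n (Nat.le_of_lt_succ hn)
  refine ⟨e, hinj, fun i => ⟨he i, by rw [← sol_add_two, hroot]⟩, ⟨?_⟩, ?_, fun n k hn hk => ?_⟩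
  · have hpos : ∀ i, 0 ≤ (boxMass σ v (e i) (N + 1))⁻¹ := fun i =>
      (inv_pos.2 (boxMass_succ_pos _ _ _ _)).le
    have hsum := horth 0 N.succ_pos 0 N.succ_pos
    simp only [zero_add, sol_one, mul_one, if_true] at hsum
    simp only [boxMeasure, Measure.coe_finsetSum, Finset.sum_apply, Measure.smul_apply,
      measure_univ, smul_eq_mul, mul_one]
    rw [← ENNReal.ofReal_sum_of_nonneg fun i _ => hpos i, hsum, ENNReal.ofReal_one]
  · have hdirac : ∀ i, ∀ᵐ E ∂Measure.dirac (e i), E ∈ Icc (-3 : ℝ) 3 := fun i =>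
      (ae_dirac_iff measurableSet_Icc).2 (abs_le.1 (he i))
    rw [boxMeasure, ae_finsetSum_measure_iff]
    exact fun i _ => Measure.ae_smul_measure (hdirac i) _
  · rw [integral_boxMeasure]
    exact horth n (by exact_mod_cast hn) k (by exact_mod_cast hk)

end Box

/-! ### Averaging the box spectral measures over the last potential value -/

section ChangeOfVariables

/-- The push-forward of the function `G` on `s` under a map `f` that is injective on `s`. The
supremum runs over at most one point, and its measurability is easy to see. -/
def pushSup (f : ℝ → ℝ) (s : Set ℝ) (G : ℝ → ℝ≥0∞) (t : ℝ) : ℝ≥0∞ := ⨆ x ∈ s ∩ f ⁻¹' {t}, G x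

variable {f f' : ℝ → ℝ} {s : Set ℝ} {G : ℝ → ℝ≥0∞}

lemma measurable_pushSup (hs : MeasurableSet s) (hf : ContinuousOn f s) (hinj : InjOn f s)
    (hG : Measurable G) : Measurable (pushSup f s G) := by
  refine measurable_of_Ioi fun a => ?_
  have himage : pushSup f s G ⁻¹' Ioi a = f '' (s ∩ G ⁻¹' Ioi a) := by
    ext t
    simp only [pushSup, Set.mem_preimage, Set.mem_Ioi, lt_iSup_iff, Set.mem_image,
      Set.mem_inter_iff, Set.mem_singleton_iff, exists_prop]
    tauto
  rw [himage]
  exact (hs.inter (hG measurableSet_Ioi)).image_of_continuousOn_injOn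
    (hf.mono inter_subset_left) (hinj.mono inter_subset_left)

lemma pushSup_apply (hinj : InjOn f s) {x : ℝ} (hx : x ∈ s) : pushSup f s G (f x) = G x :=
  le_antisymm (iSup₂_le fun _ hy => hinj hy.1 hx hy.2 ▸ le_rfl) (le_iSup₂_of_le x ⟨hx, rfl⟩ le_rfl)

lemma pushSup_eq_zero {t : ℝ} (ht : t ∉ f '' s) : pushSup f s G t = 0 :=
  le_antisymm (iSup₂_le fun y hy => absurd ⟨y, hy.1, hy.2⟩ ht) zero_le

lemma lintegral_pushSup (hs : MeasurableSet s) (hf : ∀ x ∈ s, HasDerivAt f (f' x) x)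
    (hinj : InjOn f s) : ∫⁻ t, pushSup f s G t = ∫⁻ x in s, ENNReal.ofReal |f' x| * G x := by
  have hsupp : Function.support (pushSup f s G) ⊆ f '' s := fun t ht => by
    by_contra hts
    exact ht (pushSup_eq_zero hts)
  rw [← setLIntegral_eq_of_support_subset hsupp, lintegral_image_eq_lintegral_abs_deriv_mul hs
    (fun x hx => (hf x hx).hasDerivWithinAt) hinj]
  exact setLIntegral_congr_fun hs fun x hx => by simp only [pushSup_apply hinj hx]

end ChangeOfVariables

section Weyl

variable {σ : ℝ} {v : ℕ → ℝ}

lemma solPoly_succ_monic_and_natDegree (n : ℕ) :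
    ((solPoly σ v (n + 1)).Monic ∧ (solPoly σ v (n + 1)).natDegree = n) ∧
      (solPoly σ v n).natDegree ≤ n := by
  induction n with
  | zero => simp [solPoly]
  | succ n ih =>
    obtain ⟨⟨hm, hd⟩, hd'⟩ := ih
    have hm' : ((X - C (v n)) * solPoly σ v (n + 1)).Monic := (monic_X_sub_C _).mul hm
    have hn' : ((X - C (v n)) * solPoly σ v (n + 1)).natDegree = n + 1 := by
      rw [(monic_X_sub_C _).natDegree_mul hm, natDegree_X_sub_C, hd, add_comm]
    have hlt : (solPoly σ v n).natDegree < ((X - C (v n)) * solPoly σ v (n + 1)).natDegree := by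
      omega
    refine ⟨⟨hm'.sub_of_left (degree_lt_degree hlt), ?_⟩, by omega⟩
    rw [solPoly, natDegree_sub_eq_left_of_natDegree_lt hlt, hn']

lemma solPoly_succ_monic (n : ℕ) : (solPoly σ v (n + 1)).Monic :=
  (solPoly_succ_monic_and_natDegree n).1.1

lemma natDegree_solPoly_succ (n : ℕ) : (solPoly σ v (n + 1)).natDegree = n :=
  (solPoly_succ_monic_and_natDegree n).1.2

lemma hasDerivAt_sol (E : ℝ) (n : ℕ) :
    HasDerivAt (fun E => sol σ v E n) ((derivative (solPoly σ v n)).eval E) E :=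
  (solPoly σ v n).hasDerivAt E

lemma wronskian_eq_boxMass (E : ℝ) (n : ℕ) :
    (derivative (solPoly σ v (n + 1))).eval E * sol σ v E n -
      (derivative (solPoly σ v n)).eval E * sol σ v E (n + 1) = boxMass σ v E n := by
  induction n with
  | zero => simp [solPoly, boxMass]
  | succ n ih =>
    rw [boxMass, sum_range_succ, ← boxMass, ← ih, sol_add_two]
    simp only [solPoly, derivative_sub, derivative_mul, derivative_X, derivative_C, eval_sub,
      eval_add, eval_mul, eval_X, eval_C, eval_one, eval_zero]
    simp only [sol]
    ring

/-- The Weyl function: the potential value at the site `n` for which `E` becomes an eigenvalue of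
the box `0, …, n`. -/
def weyl (σ : ℝ) (v : ℕ → ℝ) (n : ℕ) (E : ℝ) : ℝ := E - sol σ v E n / sol σ v E (n + 1)

/-- The poles of the Weyl function. -/
def weylPoles (σ : ℝ) (v : ℕ → ℝ) (n : ℕ) : Finset ℝ := (solPoly σ v (n + 1)).roots.toFinset

/-- The part of the real line on which `A` is the set of those poles of the Weyl function that lie
to the left; the Weyl function increases on each of these intervals. -/
def weylBranch (σ : ℝ) (v : ℕ → ℝ) (n : ℕ) (A : Finset ℝ) : Set ℝ :=
  {E | sol σ v E (n + 1) ≠ 0 ∧ (weylPoles σ v n).filter (· < E) = A}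

/-- The part of a branch over the energies in `[-3, 3]` on which the potential value at the site `n`
stays in `[-1, 1]`. -/
def weylPiece (σ : ℝ) (v : ℕ → ℝ) (n : ℕ) (A : Finset ℝ) : Set ℝ :=
  weylBranch σ v n A ∩ (Icc (-3) 3 ∩ weyl σ v n ⁻¹' Icc (-1) 1)

lemma mem_weylPoles {n : ℕ} {E : ℝ} : E ∈ weylPoles σ v n ↔ sol σ v E (n + 1) = 0 := by
  simp [weylPoles, (solPoly_succ_monic n).ne_zero, sol]

lemma hasDerivAt_weyl {n : ℕ} {E : ℝ} (h : sol σ v E (n + 1) ≠ 0) :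
    HasDerivAt (weyl σ v n) (boxMass σ v E (n + 1) / sol σ v E (n + 1) ^ 2) E := by
  refine ((hasDerivAt_id E).sub
    ((hasDerivAt_sol E n).div (hasDerivAt_sol E (n + 1)) h)).congr_deriv ?_
  rw [boxMass, sum_range_succ, ← boxMass, ← wronskian_eq_boxMass]
  field_simp
  ring

lemma strictMonoOn_weyl {n : ℕ} {a b : ℝ} (h : ∀ x ∈ Icc a b, sol σ v x (n + 1) ≠ 0) :
    StrictMonoOn (weyl σ v n) (Icc a b) := by
  refine strictMonoOn_of_deriv_pos (convex_Icc a b)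
    (fun x hx => (hasDerivAt_weyl (h x hx)).continuousAt.continuousWithinAt) fun x hx => ?_
  have hx' := h x (interior_subset hx)
  rw [(hasDerivAt_weyl hx').deriv]
  exact div_pos (boxMass_succ_pos _ _ _ _) (by positivity)

lemma strictMonoOn_weyl_weylBranch (n : ℕ) (A : Finset ℝ) :
    StrictMonoOn (weyl σ v n) (weylBranch σ v n A) := by
  intro x hx y hy hxy
  refine strictMonoOn_weyl (fun z hz h0 => ?_) (left_mem_Icc.2 hxy.le) (right_mem_Icc.2 hxy.le) hxy
  have hzy : z < y := hz.2.lt_of_ne fun h => hy.1 (h ▸ h0)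
  have hzA : z ∈ A := hy.2 ▸ Finset.mem_filter.2 ⟨mem_weylPoles.2 h0, hzy⟩
  exact (Finset.mem_filter.1 (hx.2 ▸ hzA)).2.not_ge hz.1

lemma injOn_weyl_weylPiece (n : ℕ) (A : Finset ℝ) : InjOn (weyl σ v n) (weylPiece σ v n A) :=
  (strictMonoOn_weyl_weylBranch n A).injOn.mono inter_subset_left

lemma measurable_boxMass (n : ℕ) : Measurable fun E => boxMass σ v E n := by
  unfold boxMass
  fun_prop

lemma measurableSet_weylBranch (n : ℕ) (A : Finset ℝ) : MeasurableSet (weylBranch σ v n A) := by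
  refine .inter (measurable_sol measurable_const measurable_id _
    (measurableSet_singleton 0).compl) ?_
  refine OrdConnected.measurableSet ⟨fun x hx y hy z hz => ?_⟩
  apply subset_antisymm
  · rw [← hy]
    exact monotone_filter_right _ fun r _ hr => hr.trans_le hz.2
  · rw [← hx]
    exact monotone_filter_right _ fun r _ hr => hr.trans_le hz.1

lemma measurableSet_weylPiece (n : ℕ) (A : Finset ℝ) : MeasurableSet (weylPiece σ v n A) := by
  have hweyl : Measurable (weyl σ v n) := by
    unfold weyl
    fun_prop
  exact (measurableSet_weylBranch n A).inter (measurableSet_Icc.inter (hweyl measurableSet_Icc))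

lemma hasDerivAt_weyl_of_mem {n : ℕ} {A : Finset ℝ} {E : ℝ} (hE : E ∈ weylPiece σ v n A) :
    HasDerivAt (weyl σ v n) (boxMass σ v E (n + 1) / sol σ v E (n + 1) ^ 2) E :=
  hasDerivAt_weyl hE.1.1

lemma measurable_pushSup_weyl {n : ℕ} {G : ℝ → ℝ≥0∞} (hG : Measurable G) (A : Finset ℝ) :
    Measurable (pushSup (weyl σ v n) (weylPiece σ v n A) G) :=
  measurable_pushSup (measurableSet_weylPiece n A)
    (fun _ hx => (hasDerivAt_weyl_of_mem hx).continuousAt.continuousWithinAt)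
    (injOn_weyl_weylPiece n A) hG

lemma norm_state_le {n : ℕ} {A : Finset ℝ} {E : ℝ} (hE : E ∈ weylPiece σ v n A) :
    ‖state σ v E n‖ ≤ 4 * ‖sol σ v E (n + 1)‖ := by
  obtain ⟨⟨h0, -⟩, hE3, hE1⟩ := hE
  have hquot : |sol σ v E n / sol σ v E (n + 1)| ≤ 4 := by
    rw [abs_le]
    simp only [weyl, Set.mem_preimage, Set.mem_Icc] at hE1 hE3
    constructor <;> linarith [hE1.1, hE1.2, hE3.1, hE3.2]
  rw [abs_div, div_le_iff₀ (abs_pos.2 h0)] at hquot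
  exact max_le (le_mul_of_one_le_left (norm_nonneg _) (by norm_num)) hquot

lemma ofReal_deriv_weyl_mul_le {n : ℕ} {A : Finset ℝ} {E : ℝ} (hE : E ∈ weylPiece σ v n A)
    (a : ℝ≥0∞) :
    ENNReal.ofReal |boxMass σ v E (n + 1) / sol σ v E (n + 1) ^ 2| *
      (a / ENNReal.ofReal (boxMass σ v E (n + 1))) ≤ 16 * (a * ‖state σ v E n‖ₑ⁻¹ ^ 2) := by
  have hb := boxMass_succ_pos σ v E n
  have hinv : ‖sol σ v E (n + 1)‖ₑ⁻¹ ≤ 4 * ‖state σ v E n‖ₑ⁻¹ := by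
    refine inv_le_mul_inv_of_le_mul (by simp) (by simp) ?_
    rw [← ofReal_norm, ← ofReal_norm, ← ENNReal.ofReal_ofNat, ← ENNReal.ofReal_mul (by simp)]
    exact ENNReal.ofReal_le_ofReal (norm_state_le hE)
  have hderiv : ENNReal.ofReal |boxMass σ v E (n + 1) / sol σ v E (n + 1) ^ 2| =
      ENNReal.ofReal (boxMass σ v E (n + 1)) * ‖sol σ v E (n + 1)‖ₑ⁻¹ ^ 2 := by
    have hs : 0 < sol σ v E (n + 1) ^ 2 := sq_pos_of_ne_zero hE.1.1
    rw [abs_of_nonneg (by positivity), div_eq_mul_inv, ENNReal.ofReal_mul hb.le,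
      ENNReal.ofReal_inv_of_pos hs, ← sq_abs, ENNReal.ofReal_pow (abs_nonneg _),
      Real.enorm_eq_ofReal_abs, ENNReal.inv_pow]
  calc _ = a * ‖sol σ v E (n + 1)‖ₑ⁻¹ ^ 2 := by
        rw [hderiv, mul_right_comm, ENNReal.mul_div_cancel (by simpa using hb)
          ENNReal.ofReal_ne_top]
    _ ≤ a * (4 * ‖state σ v E n‖ₑ⁻¹) ^ 2 := by gcongr
    _ = _ := by ring

lemma lintegral_sum_pushSup_weyl_le (n : ℕ) {F : ℝ → ℝ≥0∞} (hF : Measurable F)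
    (P : Finset (Finset ℝ)) :
    ∫⁻ t, ∑ A ∈ P, pushSup (weyl σ v n) (weylPiece σ v n A)
        (fun E => F E / ENNReal.ofReal (boxMass σ v E (n + 1))) t ≤
      16 * ∫⁻ E, F E * ‖state σ v E n‖ₑ⁻¹ ^ 2 ∂window := by
  have hdisj : PairwiseDisjoint (P : Set (Finset ℝ)) (weylPiece σ v n) := by
    intro A _ B _ hAB
    refine Set.disjoint_left.2 fun E hA hB => hAB ?_
    rw [← hA.1.2, ← hB.1.2]
  have hmeas : Measurable fun E => F E * ‖state σ v E n‖ₑ⁻¹ ^ 2 := by fun_prop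
  have hG : Measurable fun E => F E / ENNReal.ofReal (boxMass σ v E (n + 1)) :=
    hF.div (measurable_boxMass _).ennreal_ofReal
  rw [lintegral_finsetSum _ fun A _ => measurable_pushSup_weyl hG A]
  calc _ ≤ ∑ A ∈ P, 16 * ∫⁻ E in weylPiece σ v n A, F E * ‖state σ v E n‖ₑ⁻¹ ^ 2 := by
        refine sum_le_sum fun A _ => ?_
        rw [lintegral_pushSup (measurableSet_weylPiece n A) (fun _ => hasDerivAt_weyl_of_mem)
          (injOn_weyl_weylPiece n A), ← lintegral_const_mul _ hmeas]
        exact setLIntegral_mono (hmeas.const_mul _) fun E hE => ofReal_deriv_weyl_mul_le hE _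
    _ = 16 * ∫⁻ E in ⋃ A ∈ P, weylPiece σ v n A, F E * ‖state σ v E n‖ₑ⁻¹ ^ 2 := by
        rw [← mul_sum, ← lintegral_biUnion_finset hdisj fun A _ => measurableSet_weylPiece n A]
    _ ≤ _ := by
        gcongr
        exact Measure.restrict_mono_set _ (iUnion₂_subset fun A _ E hE => hE.2.1)

lemma sum_le_sum_pushSup_weyl {n : ℕ} {t : ℝ} (ht : |t| ≤ 1) {S : Finset ℝ}
    (hS : ∀ e ∈ S, |e| ≤ 3 ∧ (e - t) * sol σ v e (n + 1) - sol σ v e n = 0) (G : ℝ → ℝ≥0∞) :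
    ∑ e ∈ S, G e ≤ ∑ A ∈ (weylPoles σ v n).powerset,
      pushSup (weyl σ v n) (weylPiece σ v n A) G t := by
  set branch : ℝ → Finset ℝ := fun e => (weylPoles σ v n).filter (· < e)
  have hne : ∀ e ∈ S, sol σ v e (n + 1) ≠ 0 := by
    intro e he h0
    have hn := (hS e he).2
    rw [h0, mul_zero, zero_sub, neg_eq_zero] at hn
    exact state_ne_zero (σ := σ) (v := v) (E := e) n (Prod.ext h0 hn)
  have hweyl : ∀ e ∈ S, weyl σ v n e = t := fun e he => by
    have := (hS e he).2
    have h0 := hne e he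
    rw [weyl]
    field_simp
    linarith
  have hmem : ∀ e ∈ S, e ∈ weylPiece σ v n (branch e) := fun e he =>
    ⟨⟨hne e he, rfl⟩, abs_le.1 (hS e he).1,
      by rwa [Set.mem_preimage, hweyl e he, Set.mem_Icc, ← abs_le]⟩
  have hbranch : InjOn branch S := fun e he e' he' h =>
    injOn_weyl_weylPiece n (branch e) (hmem e he) (h ▸ hmem e' he')
      ((hweyl e he).trans (hweyl e' he').symm)
  calc ∑ e ∈ S, G e = ∑ e ∈ S, pushSup (weyl σ v n) (weylPiece σ v n (branch e)) G t :=
        sum_congr rfl fun e he => by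
          rw [← hweyl e he, pushSup_apply (injOn_weyl_weylPiece n _) (hmem e he)]
    _ = ∑ A ∈ S.image branch, pushSup (weyl σ v n) (weylPiece σ v n A) G t :=
        (sum_image (f := fun A => pushSup (weyl σ v n) (weylPiece σ v n A) G t) hbranch).symm
    _ ≤ _ := sum_le_sum_of_subset (image_subset_iff.2 fun e _ =>
        mem_powerset.2 (filter_subset _ _))

lemma exists_forall_sum_div_boxMass_le (σ : ℝ) (v : ℕ → ℝ) (n : ℕ) {F : ℝ → ℝ≥0∞}
    (hF : Measurable F) : ∃ t : ℝ, |t| ≤ 1 ∧ ∀ S : Finset ℝ,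
      (∀ e ∈ S, |e| ≤ 3 ∧ (e - t) * sol σ v e (n + 1) - sol σ v e n = 0) →
      ∑ e ∈ S, F e / ENNReal.ofReal (boxMass σ v e (n + 1)) ≤
        16 * ∫⁻ E, F E * ‖state σ v E n‖ₑ⁻¹ ^ 2 ∂window := by
  set g : ℝ → ℝ≥0∞ := fun t => ∑ A ∈ (weylPoles σ v n).powerset,
    pushSup (weyl σ v n) (weylPiece σ v n A)
      (fun E => F E / ENNReal.ofReal (boxMass σ v E (n + 1))) t
  have hg : Measurable g := Finset.measurable_fun_sum _ fun A _ =>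
    measurable_pushSup_weyl (hF.div (measurable_boxMass _).ennreal_ofReal) A
  obtain ⟨t, ht, hle⟩ := exists_le_setLAverage (μ := volume) (s := Icc (-1 : ℝ) 1) (f := g)
    (by simp) (by simp) hg.aemeasurable
  refine ⟨t, abs_le.2 ht, fun S hS => (sum_le_sum_pushSup_weyl (abs_le.2 ht) hS _).trans ?_⟩
  calc g t ≤ ⨍⁻ t in Icc (-1 : ℝ) 1, g t ∂volume := hle
    _ ≤ ∫⁻ t in Icc (-1 : ℝ) 1, g t := by
        rw [setLAverage_eq, Real.volume_Icc]
        exact ENNReal.div_le_of_le_mul (le_mul_of_one_le_right' (by norm_num))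
    _ ≤ ∫⁻ t, g t := setLIntegral_le_lintegral _ _
    _ ≤ _ := lintegral_sum_pushSup_weyl_le n hF _

theorem exists_isSpectralMeasure_lintegral_le (hσ : |σ| ≤ 1) {n : ℕ} (hv : ∀ i < n, |v i| ≤ 1)
    {F : ℝ → ℝ≥0∞} (hF : Measurable F) :
    ∃ μ, IsSpectralMeasure σ v (n + 1) μ ∧
      ∫⁻ E, F E ∂μ ≤ 16 * ∫⁻ E, F E * ‖state σ v E n‖ₑ⁻¹ ^ 2 ∂window := by
  obtain ⟨t, ht, hsum⟩ := exists_forall_sum_div_boxMass_le σ v n hF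
  have hvt : ∀ i < n, Function.update v n t i = v i := fun i hi => Function.update_of_ne hi.ne _ _
  obtain ⟨e, hinj, he, hμ⟩ := exists_isSpectralMeasure_boxMeasure (v := Function.update v n t) hσ
    (N := n) fun i hi => by
      rcases hi.eq_or_lt with rfl | hi
      · simpa using ht
      · simpa [hvt i hi] using hv i hi
  have hsol : ∀ E, ∀ i ≤ n + 1, sol σ (Function.update v n t) E i = sol σ v E i :=
    fun E i hi => sol_congr fun j hj => hvt j (by omega)
  have hmass : ∀ E, boxMass σ (Function.update v n t) E (n + 1) = boxMass σ v E (n + 1) :=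
    fun E => sum_congr rfl fun j hj => by rw [hsol E _ (Finset.mem_range.1 hj)]
  refine ⟨_, hμ.congr hvt, le_trans (le_of_eq ?_) (hsum (univ.image e) fun x hx => ?_)⟩
  · rw [lintegral_boxMeasure, sum_image hinj.injOn]
    simp only [hmass]
  · obtain ⟨i, -, rfl⟩ := Finset.mem_image.1 hx
    simpa [hsol] using he i

end Weyl

/-! ### Spectral measures of half-line operators -/

section SpectralMeasure

variable {σ : ℝ} {v : ℕ → ℝ}

/-- The half-line solutions form a sequence of polynomials, one for each degree. -/
def solSequence (σ : ℝ) (v : ℕ → ℝ) : Polynomial.Sequence ℝ where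
  elems' n := solPoly σ v (n + 1)
  degree_eq' n := by
    rw [degree_eq_natDegree (solPoly_succ_monic n).ne_zero, natDegree_solPoly_succ]

lemma IsSpectralMeasure.integral_sol {μ : Measure ℝ} {N : ℕ∞} (hμ : IsSpectralMeasure σ v N μ)
    {n : ℕ} (hn : n < N) : ∫ E, sol σ v E (n + 1) ∂μ = if n = 0 then 1 else 0 := by
  simpa using hμ.orthonormal n 0 hn (pos_of_gt hn)

lemma IsSpectralMeasure.integral_eval_eq {μ ν : Measure ℝ} {M N : ℕ∞}
    (hμ : IsSpectralMeasure σ v M μ) (hν : IsSpectralMeasure σ v N ν) {p : ℝ[X]}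
    (hpM : p.natDegree < M) (hpN : p.natDegree < N) :
    ∫ E, p.eval E ∂μ = ∫ E, p.eval E ∂ν := by
  have hlead : ∀ n, IsUnit (solSequence σ v n).leadingCoeff := fun n => by
    rw [solSequence, (solPoly_succ_monic n).leadingCoeff]
    exact isUnit_one
  have hp := mem_degreeLE.2 p.degree_le_natDegree
  rw [← (solSequence σ v).span_degreeLE fun n _ => hlead n] at hp
  generalize p.natDegree = d at hpM hpN hp
  induction hp using Submodule.span_induction with
  | zero => simp
  | add p q _ _ hp hq =>
    simp only [eval_add]
    rw [integral_add (hμ.integrable p.continuous) (hμ.integrable q.continuous),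
      integral_add (hν.integrable p.continuous) (hν.integrable q.continuous), hp, hq]
  | smul c p _ hp => simp only [eval_smul, smul_eq_mul, integral_const_mul, hp]
  | mem q hq =>
    obtain ⟨n, hn, rfl⟩ := hq
    have hn' : (n : ℕ∞) ≤ d := by exact_mod_cast hn
    exact (hμ.integral_sol (hn'.trans_lt hpM)).trans (hν.integral_sol (hn'.trans_lt hpN)).symm

lemma continuous_sol_right (n : ℕ) : Continuous fun E => sol σ v E n :=
  (solPoly σ v n).continuous

lemma continuous_sumSq (n : ℕ) : Continuous fun E => sumSq σ v E n :=
  continuous_finsetSum _ fun i _ => (continuous_sol_right i).pow 2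

lemma continuous_frac (m n : ℕ) : Continuous fun E => frac σ v E m n :=
  continuous_const.sub ((continuous_sumSq m).div (continuous_sumSq n) fun _ => (sumSq_pos n).ne')

lemma exists_probabilityMeasure_Icc (hσ : |σ| ≤ 1) (hv : ∀ n, |v n| ≤ 1) (N : ℕ) :
    ∃ μ : ProbabilityMeasure (Icc (-3 : ℝ) 3), ∀ n ≤ N, ∀ k ≤ N,
      ∫ E, sol σ v (E : ℝ) (n + 1) * sol σ v (E : ℝ) (k + 1) ∂(μ : Measure (Icc (-3 : ℝ) 3)) =
        if n = k then 1 else 0 := by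
  obtain ⟨e, -, -, hμ⟩ := exists_isSpectralMeasure_boxMeasure hσ fun n (_ : n ≤ N) => hv n
  have hprob := hμ.isProbabilityMeasure
  have hcomap : IsProbabilityMeasure
      ((boxMeasure σ v e).comap ((↑) : Icc (-3 : ℝ) 3 → ℝ)) :=
    (MeasurableEmbedding.subtype_coe measurableSet_Icc).isProbabilityMeasure_comap
      (by simpa using hμ.ae_mem)
  refine ⟨⟨_, hcomap⟩, fun n hn k hk => ?_⟩
  rw [ProbabilityMeasure.coe_mk, integral_subtype_comap measurableSet_Icc
    fun E => sol σ v E (n + 1) * sol σ v E (k + 1), Measure.restrict_eq_self_of_ae_mem hμ.ae_mem]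
  exact hμ.orthonormal n k (by exact_mod_cast Nat.lt_succ_of_le hn)
    (by exact_mod_cast Nat.lt_succ_of_le hk)

theorem exists_isSpectralMeasure (hσ : |σ| ≤ 1) (hv : ∀ n, |v n| ≤ 1) :
    ∃ μ, IsSpectralMeasure σ v ⊤ μ := by
  choose ν hν using exists_probabilityMeasure_Icc hσ hv
  obtain ⟨μ, -, hμ⟩ := isCompact_univ.ultrafilter_le_nhds ((Filter.hyperfilter ℕ).map ν) (by simp)
  have hval : AEMeasurable ((↑) : Icc (-3 : ℝ) 3 → ℝ) μ := measurable_subtype_coe.aemeasurable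
  refine ⟨(μ : Measure (Icc (-3 : ℝ) 3)).map (↑), Measure.isProbabilityMeasure_map hval, ?_,
    fun n k _ _ => ?_⟩
  · exact (ae_map_iff hval measurableSet_Icc).2 (ae_of_all _ Subtype.prop)
  have hcont : Continuous fun E => sol σ v E (n + 1) * sol σ v E (k + 1) :=
    (continuous_sol_right _).mul (continuous_sol_right _)
  rw [integral_map hval hcont.aestronglyMeasurable]
  refine tendsto_nhds_unique (ProbabilityMeasure.tendsto_iff_forall_integral_tendsto.1 hμ
    (.mkOfCompact ⟨_, hcont.comp continuous_subtype_val⟩)) (tendsto_const_nhds.congr' ?_)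
  have hlarge : ∀ᶠ N in (Filter.hyperfilter ℕ : Filter ℕ), max n k ≤ N :=
    Nat.hyperfilter_le_atTop (Filter.eventually_ge_atTop _)
  filter_upwards [hlarge] with N hN
  exact (hν N n (le_of_max_le_left hN) k (le_of_max_le_right hN)).symm

lemma IsSpectralMeasure.lintegral_ofReal_le_add {μ ν : Measure ℝ} {M N : ℕ∞}
    (hμ : IsSpectralMeasure σ v M μ) (hν : IsSpectralMeasure σ v N ν) {g : ℝ → ℝ}
    (hg : Continuous g) (hg0 : 0 ≤ g) {p : ℝ[X]} (hpM : p.natDegree < M) (hpN : p.natDegree < N)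
    {δ : ℝ} (hδ : ∀ E ∈ Icc (-3 : ℝ) 3, |p.eval E - g E| ≤ δ) :
    ∫⁻ E, ENNReal.ofReal (g E) ∂μ ≤ ∫⁻ E, ENNReal.ofReal (g E) ∂ν + ENNReal.ofReal (2 * δ) := by
  have hprobμ := hμ.isProbabilityMeasure
  have hprobν := hν.isProbabilityMeasure
  have hμp : ∫ E, g E ∂μ ≤ ∫ E, p.eval E + δ ∂μ :=
    integral_mono_ae (hμ.integrable hg) (hμ.integrable (by fun_prop)) <| by
      filter_upwards [hμ.ae_mem] with E hE
      linarith [(abs_le.1 (hδ E hE)).1]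
  have hνp : ∫ E, p.eval E ∂ν ≤ ∫ E, g E + δ ∂ν :=
    integral_mono_ae (hν.integrable p.continuous) (hν.integrable (by fun_prop)) <| by
      filter_upwards [hν.ae_mem] with E hE
      linarith [(abs_le.1 (hδ E hE)).2]
  rw [integral_add (hμ.integrable p.continuous) (integrable_const _), integral_const,
    probReal_univ, one_smul, hμ.integral_eval_eq hν hpM hpN] at hμp
  rw [integral_add (hν.integrable hg) (integrable_const _), integral_const, probReal_univ,
    one_smul] at hνp
  rw [← ofReal_integral_eq_lintegral_ofReal (hμ.integrable hg) (ae_of_all _ hg0),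
    ← ofReal_integral_eq_lintegral_ofReal (hν.integrable hg) (ae_of_all _ hg0)]
  exact (ENNReal.ofReal_le_ofReal (by linarith)).trans ENNReal.ofReal_add_le

theorem IsSpectralMeasure.lintegral_frac_le {μ : Measure ℝ} (hμ : IsSpectralMeasure σ v ⊤ μ)
    (hσ : |σ| ≤ 1) {m n k : ℕ} (hmn : m ≤ n) (hv : ∀ i < k, |v i| ≤ 1) {p : ℝ[X]}
    (hp : p.natDegree ≤ k) {δ : ℝ} (hδ : ∀ E ∈ Icc (-3 : ℝ) 3, |p.eval E - frac σ v E m n| ≤ δ) :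
    ∫⁻ E, ENNReal.ofReal (frac σ v E m n) ∂μ ≤
      16 * fracInt σ v m n k + ENNReal.ofReal (2 * δ) := by
  obtain ⟨ν, hν, hle⟩ := exists_isSpectralMeasure_lintegral_le hσ hv
    (F := fun E => ENNReal.ofReal (frac σ v E m n)) (by fun_prop)
  exact (hμ.lintegral_ofReal_le_add hν (continuous_frac m n) (fun E => frac_nonneg hmn)
    (ENat.natCast_lt_top _) (by exact_mod_cast Nat.lt_succ_of_le hp) hδ).trans
    (add_le_add_left hle _)

end SpectralMeasure

/-! ### Pure point spectrum from square-summable solutions -/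

section PurePoint

lemma bddAbove_of_summable_one_sub_div {s : ℕ → ℝ} (hs : Monotone s) (hpos : ∀ j, 0 < s j)
    (h : Summable fun j => 1 - s j / s (j + 1)) : BddAbove (Set.range s) := by
  have hnonneg : ∀ j, 0 ≤ 1 - s j / s (j + 1) := fun j =>
    sub_nonneg.2 (div_le_one_of_le₀ (hs j.le_succ) (hpos _).le)
  obtain ⟨i, hi⟩ := ((tendsto_sum_nat_add fun j => 1 - s j / s (j + 1)).eventually
    (gt_mem_nhds one_half_pos)).exists
  refine ⟨2 * s i, forall_mem_range.2 fun J => (hs (Nat.le_add_right J i)).trans ?_⟩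
  have hle : (s (J + i) - s i) / s (J + i) ≤ 1 / 2 := by
    calc (s (J + i) - s i) / s (J + i)
        = ∑ k ∈ range J, (s (k + i + 1) - s (k + i)) / s (J + i) := by
          have := sum_range_sub (fun k => s (k + i)) J
          simp only [zero_add, add_right_comm _ 1 i] at this
          rw [← sum_div, this]
      _ ≤ ∑ k ∈ range J, (1 - s (k + i) / s (k + i + 1)) := by
          refine sum_le_sum fun k hk => ?_
          rw [one_sub_div (hpos _).ne']
          have := Finset.mem_range.1 hk
          exact div_le_div_of_nonneg_left (sub_nonneg.2 (hs (by omega))) (hpos _) (hs (by omega))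
      _ ≤ 1 / 2 := (((summable_nat_add_iff i).2 h).sum_le_tsum _ fun k _ => hnonneg _).trans hi.le
  rw [div_le_iff₀ (hpos _)] at hle
  linarith

variable {σ : ℝ} {v : ℕ → ℝ} {E : ℝ} {μ : Measure ℝ}

lemma summable_sol_sq {N : ℕ → ℕ} (hmono : Monotone N) (hN : ∀ j, j ≤ N j)
    (h : Summable fun j => frac σ v E (N j) (N (j + 1))) :
    Summable fun n => sol σ v E (n + 1) ^ 2 := by
  obtain ⟨c, hc⟩ := bddAbove_of_summable_one_sub_div (sumSq_mono.comp hmono)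
    (fun j => sumSq_pos (N j)) h
  refine summable_of_sum_range_le (c := c) (fun n => sq_nonneg _) fun n => ?_
  calc ∑ i ∈ range n, sol σ v E (i + 1) ^ 2 ≤ ∑ i ∈ range (n + 1), sol σ v E (i + 1) ^ 2 :=
        sum_le_sum_of_subset_of_nonneg (range_mono n.le_succ) fun _ _ _ => sq_nonneg _
    _ ≤ sumSq σ v E n := by
        rw [sumSq, sum_range_succ' _ (n + 1)]
        exact le_add_of_nonneg_right (sq_nonneg _)
    _ ≤ c := (sumSq_mono (hN n)).trans (hc (mem_range_self n))

lemma ae_summable_sol_sq {N : ℕ → ℕ} (hmono : Monotone N) (hN : ∀ j, j ≤ N j)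
    (h : ∑' j, ∫⁻ E, ENNReal.ofReal (frac σ v E (N j) (N (j + 1))) ∂μ ≠ ∞) :
    ∀ᵐ E ∂μ, Summable fun n => sol σ v E (n + 1) ^ 2 := by
  rw [← lintegral_tsum (by fun_prop)] at h
  filter_upwards [ae_lt_top (by fun_prop) h] with E hE
  refine summable_sol_sq hmono hN ((ENNReal.summable_toReal hE.ne).congr fun j => ?_)
  exact ENNReal.toReal_ofReal (frac_nonneg (hmono j.le_succ))

lemma IsSpectralMeasure.integral_sum_sq (hμ : IsSpectralMeasure σ v ⊤ μ) (g : ℕ → ℝ)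
    (s : Finset ℕ) :
    ∫ E, (∑ n ∈ s, g n * sol σ v E (n + 1)) ^ 2 ∂μ = ∑ n ∈ s, g n ^ 2 := by
  have hint : ∀ n k, Integrable (fun E => g n * g k * (sol σ v E (n + 1) * sol σ v E (k + 1))) μ :=
    fun n k => hμ.integrable
      (continuous_const.mul ((continuous_sol_right _).mul (continuous_sol_right _)))
  simp_rw [sq (∑ n ∈ s, g n * sol σ v _ (n + 1)), sum_mul_sum, mul_mul_mul_comm (g _)]
  rw [integral_finsetSum _ fun n _ => integrable_finsetSum _ fun k _ => hint n k]
  refine sum_congr rfl fun n hn => ?_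
  rw [integral_finsetSum _ fun k _ => hint n k]
  simp_rw [integral_const_mul, hμ.orthonormal n _ (ENat.natCast_lt_top _) (ENat.natCast_lt_top _)]
  simp [hn, sq]

lemma IsSpectralMeasure.lintegral_sum_sq (hμ : IsSpectralMeasure σ v ⊤ μ) (g : ℕ → ℝ)
    (s : Finset ℕ) :
    ∫⁻ E, ENNReal.ofReal ((∑ n ∈ s, g n * sol σ v E (n + 1)) ^ 2) ∂μ =
      ENNReal.ofReal (∑ n ∈ s, g n ^ 2) := by
  rw [← hμ.integral_sum_sq, ofReal_integral_eq_lintegral_ofReal (hμ.integrable ?_)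
    (ae_of_all _ fun E => sq_nonneg _)]
  exact (continuous_finsetSum _ fun n _ => continuous_const.mul (continuous_sol_right _)).pow 2

lemma IsSpectralMeasure.sum_sq_le_tsum_sub (hμ : IsSpectralMeasure σ v ⊤ μ)
    {g : ℕ → ℝ} (hg : Summable fun n => g n ^ 2)
    (h : ∀ᵐ E ∂μ, HasSum (fun n => g n * sol σ v E (n + 1)) 0) (K : ℕ) :
    ∑ n ∈ range K, g n ^ 2 ≤ ∑' n, g n ^ 2 - ∑ n ∈ range K, g n ^ 2 := by
  have hle : ∀ L, ∑ n ∈ range L, g n ^ 2 ≤ ∑' n, g n ^ 2 := fun L =>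
    hg.sum_le_tsum _ fun n _ => sq_nonneg _
  have hlim : ∀ᵐ E ∂μ, Filter.liminf (fun L => ENNReal.ofReal
      ((∑ n ∈ Ico K L, g n * sol σ v E (n + 1)) ^ 2)) Filter.atTop =
        ENNReal.ofReal ((∑ n ∈ range K, g n * sol σ v E (n + 1)) ^ 2) := by
    filter_upwards [h] with E hE
    have hsub := (hE.tendsto_sum_nat.sub_const (∑ n ∈ range K, g n * sol σ v E (n + 1))).pow 2
    rw [zero_sub, neg_sq] at hsub
    refine (ENNReal.tendsto_ofReal (hsub.congr' ?_)).liminf_eq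
    filter_upwards [Filter.eventually_ge_atTop K] with L hL
    rw [sum_Ico_eq_sub _ hL]
  rw [← ENNReal.ofReal_le_ofReal_iff (sub_nonneg.2 (hle K)), ← hμ.lintegral_sum_sq,
    ← lintegral_congr_ae hlim]
  refine (lintegral_liminf_le fun L => by fun_prop).trans
    (Filter.liminf_le_of_frequently_le' (Filter.Eventually.frequently ?_))
  filter_upwards [Filter.eventually_ge_atTop K] with L hL
  rw [hμ.lintegral_sum_sq, sum_Ico_eq_sub _ hL]
  gcongr
  exact hle L

theorem IsSpectralMeasure.eq_zero_of_hasSum_zero (hμ : IsSpectralMeasure σ v ⊤ μ)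
    {g : ℕ → ℝ} (hg : Summable fun n => g n ^ 2)
    (h : ∀ᵐ E ∂μ, HasSum (fun n => g n * sol σ v E (n + 1)) 0) : g = 0 := by
  have hsum := hg.hasSum.tendsto_sum_nat
  have hzero : ∑' n, g n ^ 2 ≤ ∑' n, g n ^ 2 - ∑' n, g n ^ 2 :=
    le_of_tendsto_of_tendsto' hsum (hsum.const_sub _) (hμ.sum_sq_le_tsum_sub hg h)
  funext n
  have hn := hg.le_tsum n fun k _ => sq_nonneg _
  exact pow_eq_zero_iff two_ne_zero |>.1 (by linarith [sq_nonneg (g n)])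

lemma exists_nat_eq_or_eq_neg_one_sub (n : ℤ) : ∃ k : ℕ, n = k ∨ n = -1 - k :=
  ⟨n.toNat + (-1 - n).toNat, by omega⟩

/-- The extension of the half-line solution to `ℤ` that is multiplied by the sign `σ` under the
reflection `n ↦ -1 - n`. -/
def fullSol (σ : ℝ) (v : ℕ → ℝ) (E : ℝ) : ℤ → ℝ
  | Int.ofNat n => sol σ v E (n + 1)
  | Int.negSucc n => σ * sol σ v E (n + 1)

@[simp] lemma fullSol_natCast (n : ℕ) : fullSol σ v E n = sol σ v E (n + 1) := rfl

lemma fullSol_natCast_sub_one (n : ℕ) : fullSol σ v E (n - 1) = sol σ v E n := by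
  cases n with
  | zero =>
    change σ * sol σ v E 1 = sol σ v E 0
    rw [sol_one, sol_zero, mul_one]
  | succ n => simp

lemma fullSol_neg_one_sub_natCast (n : ℕ) :
    fullSol σ v E (-1 - n) = σ * fullSol σ v E n := by
  rw [show (-1 - n : ℤ) = Int.negSucc n by omega]
  rfl

lemma fullSol_neg_one_sub (hσ : σ ^ 2 = 1) (n : ℤ) :
    fullSol σ v E (-1 - n) = σ * fullSol σ v E n := by
  obtain ⟨k, rfl | rfl⟩ := exists_nat_eq_or_eq_neg_one_sub n
  · exact fullSol_neg_one_sub_natCast k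
  · rw [sub_sub_cancel, fullSol_neg_one_sub_natCast, ← mul_assoc, ← sq, hσ, one_mul]

variable {V : ℤ → ℝ}

lemma fullSol_equation (hσ : σ ^ 2 = 1) (hV : ∀ n, V (-1 - n) = V n) (n : ℤ) :
    fullSol σ (fun n => V n) E (n + 1) + fullSol σ (fun n => V n) E (n - 1) +
      V n * fullSol σ (fun n => V n) E n = E * fullSol σ (fun n => V n) E n := by
  have hnat : ∀ k : ℕ, fullSol σ (fun n => V n) E (k + 1) + fullSol σ (fun n => V n) E (k - 1) +
      V k * fullSol σ (fun n => V n) E k = E * fullSol σ (fun n => V n) E k := fun k => by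
    have hk := fullSol_natCast (σ := σ) (v := fun n => V n) (E := E) (k + 1)
    rw [Nat.cast_succ] at hk
    rw [hk, fullSol_natCast_sub_one, fullSol_natCast, sol_add_two]
    ring
  obtain ⟨k, rfl | rfl⟩ := exists_nat_eq_or_eq_neg_one_sub n
  · exact hnat k
  · rw [show (-1 - k + 1 : ℤ) = -1 - (k - 1) by ring, show (-1 - k - 1 : ℤ) = -1 - (k + 1) by ring,
      hV]
    simp only [fullSol_neg_one_sub hσ]
    linear_combination σ * hnat k

lemma exists_isEigenfunction (hσ : σ ^ 2 = 1) (hV : ∀ n, V (-1 - n) = V n)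
    (hsum : Summable fun n => sol σ (fun n => V n) E (n + 1) ^ 2) :
    ∃ ψ : lp (fun _ : ℤ => ℝ) 2, IsEigenfunction V E ψ ∧
      ∀ n, ψ n = fullSol σ (fun n => V n) E n := by
  have hmem : Memℓp (fullSol σ (fun n => V n) E) 2 := by
    refine memℓp_gen ?_
    simp only [ENNReal.toReal_ofNat, Real.rpow_ofNat, Real.norm_eq_abs, sq_abs]
    refine Summable.of_nat_of_neg_add_one hsum (hsum.congr fun n => ?_)
    rw [neg_add_rev, ← sub_eq_add_neg, fullSol_neg_one_sub_natCast, mul_pow, hσ, one_mul,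
      fullSol_natCast]
  refine ⟨⟨_, hmem⟩, ⟨fun h0 => ?_, fullSol_equation hσ hV⟩, fun n => rfl⟩
  have hzero : sol σ (fun n => V n) E 1 = 0 :=
    congrArg (fun ψ : lp (fun _ : ℤ => ℝ) 2 => ψ 0) h0
  simp at hzero

variable {φ : lp (fun _ : ℤ => ℝ) 2}

lemma summable_sq_add_mul_reflect (σ : ℝ) (φ : lp (fun _ : ℤ => ℝ) 2) :
    Summable fun n : ℕ => (φ n + σ * φ (-1 - n)) ^ 2 := by
  have hsq : Summable fun n : ℤ => φ n ^ 2 := by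
    simpa using (lp.memℓp φ).summable (by simp)
  have hpos : Summable fun n : ℕ => φ n ^ 2 := hsq.comp_injective Nat.cast_injective
  have hneg : Summable fun n : ℕ => φ (-1 - n) ^ 2 :=
    hsq.comp_injective (i := fun n : ℕ => (-1 - n : ℤ)) fun m n h => by simpa using h
  refine Summable.of_nonneg_of_le (fun n => sq_nonneg _) (fun n => ?_)
    ((hpos.add (hneg.mul_left (σ ^ 2))).mul_left 2)
  nlinarith [sq_nonneg (φ n - σ * φ (-1 - n))]

lemma hasSum_add_mul_reflect_mul_sol (hσ : σ ^ 2 = 1) (hV : ∀ n, V (-1 - n) = V n)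
    (hφ : ∀ E ψ, IsEigenfunction V E ψ → inner ℝ ψ φ = 0)
    (hsum : Summable fun n => sol σ (fun n => V n) E (n + 1) ^ 2) :
    HasSum (fun n : ℕ => (φ n + σ * φ (-1 - n)) * sol σ (fun n => V n) E (n + 1)) 0 := by
  obtain ⟨ψ, hψ, hval⟩ := exists_isEigenfunction hσ hV hsum
  rw [← hφ E ψ hψ]
  refine (lp.hasSum_inner (𝕜 := ℝ) ψ φ).nat_add_neg_add_one.congr_fun fun n => ?_
  rw [neg_add_rev, ← sub_eq_add_neg, hval, hval, fullSol_neg_one_sub_natCast, fullSol_natCast]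
  simp only [RCLike.inner_apply, conj_trivial]
  ring

theorem hasPurePointSpectrum_of_ae_summable (hV : ∀ n, V (-1 - n) = V n)
    (h : ∀ σ : ℝ, σ ^ 2 = 1 → ∃ μ, IsSpectralMeasure σ (fun n => V n) ⊤ μ ∧
      ∀ᵐ E ∂μ, Summable fun n => sol σ (fun n => V n) E (n + 1) ^ 2) :
    HasPurePointSpectrum V := by
  rw [HasPurePointSpectrum, Submodule.topologicalClosure_eq_top_iff, Submodule.eq_bot_iff]
  intro φ hφ
  have hzero : ∀ σ : ℝ, σ ^ 2 = 1 → ∀ n : ℕ, φ n + σ * φ (-1 - n) = 0 := by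
    intro σ hσ
    obtain ⟨μ, hμ, hae⟩ := h σ hσ
    refine congrFun (hμ.eq_zero_of_hasSum_zero (summable_sq_add_mul_reflect σ φ) ?_)
    filter_upwards [hae] with E hE
    exact hasSum_add_mul_reflect_mul_sol hσ hV
      (fun E ψ hψ => hφ ψ (Submodule.subset_span ⟨E, hψ⟩)) hE
  ext n
  rw [lp.coeFn_zero, Pi.zero_apply]
  obtain ⟨k, rfl | rfl⟩ := exists_nat_eq_or_eq_neg_one_sub n <;>
    linarith [hzero 1 (by norm_num) k, hzero (-1) (by norm_num) k]

theorem hasPurePointSpectrum_of_fracInt_le (hV : ∀ n, V (-1 - n) = V n) (hV1 : ∀ n, |V n| ≤ 1)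
    {N : ℕ → ℕ} (hmono : Monotone N) (hN : ∀ j, j ≤ N j)
    (h : ∀ σ : ℝ, σ ^ 2 = 1 → ∀ j,
      fracInt σ (fun n => V n) (N j) (N (j + 1)) (N (j + 2)) ≤ ENNReal.ofReal ((1 / 2) ^ j) ∧
      ∃ p : ℝ[X], p.natDegree ≤ N (j + 2) ∧ ∀ E ∈ Icc (-3 : ℝ) 3,
        |p.eval E - frac σ (fun n => V n) E (N j) (N (j + 1))| ≤ (1 / 2) ^ j) :
    HasPurePointSpectrum V := by
  refine hasPurePointSpectrum_of_ae_summable hV fun σ hσ => ?_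
  have hσ1 : |σ| ≤ 1 := (sq_le_one_iff_abs_le_one σ).1 hσ.le
  obtain ⟨μ, hμ⟩ := exists_isSpectralMeasure (v := fun n => V n) hσ1 fun n => hV1 n
  refine ⟨μ, hμ, ae_summable_sol_sq hmono hN (ne_top_of_le_ne_top
    (summable_geometric_two.mul_left 18).tsum_ofReal_ne_top (ENNReal.tsum_le_tsum fun j => ?_))⟩
  obtain ⟨hfrac, p, hp, hδ⟩ := h σ hσ j
  calc ∫⁻ E, ENNReal.ofReal (frac σ (fun n => V n) E (N j) (N (j + 1))) ∂μ
      ≤ 16 * fracInt σ (fun n => V n) (N j) (N (j + 1)) (N (j + 2)) +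
          ENNReal.ofReal (2 * (1 / 2) ^ j) :=
        hμ.lintegral_frac_le hσ1 (hmono j.le_succ) (fun i _ => hV1 i) hp hδ
    _ ≤ 16 * ENNReal.ofReal ((1 / 2) ^ j) + ENNReal.ofReal (2 * (1 / 2) ^ j) := by gcongr
    _ = ENNReal.ofReal (18 * (1 / 2) ^ j) := by
        rw [show (16 : ℝ≥0∞) = ENNReal.ofReal 16 by simp, ← ENNReal.ofReal_mul (by norm_num),
          ← ENNReal.ofReal_add (by positivity) (by positivity)]
        ring_nf

end PurePoint

/-! ### Realizing prescribed values on an orbit -/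

section Realization

lemma exists_continuousMap_apply_eq {X ι : Type*} [TopologicalSpace X] [CompactSpace X] [T2Space X]
    [Finite ι] {x : ι → X} (hx : Function.Injective x) {d : ι → ℝ} {δ : ℝ} (hδ : 0 ≤ δ)
    (hd : ∀ i, |d i| ≤ δ) : ∃ g : C(X, ℝ), ‖g‖ ≤ δ ∧ ∀ i, g (x i) = d i := by
  let _ : TopologicalSpace ι := ⊥
  have : DiscreteTopology ι := ⟨rfl⟩
  obtain ⟨g, hg, hgd⟩ := (⟨d, continuous_of_discreteTopology⟩ :
    C(ι, ℝ)).exists_extension_forall_mem_of_isClosedEmbedding (t := Icc (-δ) δ)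
    (fun i => abs_le.1 (hd i)) ⟨0, by simpa⟩ (continuous_of_discreteTopology.isClosedEmbedding hx)
  exact ⟨g, (ContinuousMap.norm_le _ hδ).2 fun y => abs_le.2 (hg y), congrFun hgd⟩

variable {G : Type*} [TopologicalSpace G] [AddCommGroup G] [IsTopologicalAddGroup G] {a ω : G}

/-- The point reflection of `G` that exchanges the orbit points `ω + n • a` and
`ω + (-1 - n) • a`. -/
def reflect (a ω : G) : C(G, G) := ⟨fun x => 2 • ω - a - x, by fun_prop⟩

lemma reflect_reflect (x : G) : reflect a ω (reflect a ω x) = x := by simp [reflect]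

lemma reflect_add_zsmul (n : ℤ) : reflect a ω (ω + n • a) = ω + (-1 - n) • a := by
  simp only [reflect, ContinuousMap.coe_mk, sub_smul, neg_smul, one_smul, two_nsmul]
  abel

variable [CompactSpace G] [T2Space G]

lemma exists_symmetric_continuousMap (ha : ¬ IsOfFinAddOrder a) (ω : G) {d : ℕ → ℝ} {δ : ℝ}
    (hδ : 0 ≤ δ) (hd : ∀ n, |d n| ≤ δ) (N : ℕ) :
    ∃ g : C(G, ℝ), ‖g‖ ≤ δ ∧ (∀ x, g (reflect a ω x) = g x) ∧
      ∀ n < N, g (ω + (n : ℤ) • a) = d n := by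
  have hinj : Function.Injective fun n : Finset.Ico (-N : ℤ) N => ω + (n : ℤ) • a :=
    ((add_right_injective ω).comp (injective_zsmul_iff_not_isOfFinAddOrder.2 ha)).comp
      Subtype.val_injective
  obtain ⟨g, hg, hgd⟩ := exists_continuousMap_apply_eq hinj hδ
    fun n => hd ((n : ℤ).toNat + (-1 - (n : ℤ)).toNat)
  refine ⟨(1 / 2 : ℝ) • (g + g.comp (reflect a ω)), ?_, fun x => ?_, fun n hn => ?_⟩
  · refine (ContinuousMap.norm_le _ hδ).2 fun x => ?_
    have h₁ := (g.norm_coe_le_norm x).trans hg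
    have h₂ := (g.norm_coe_le_norm (reflect a ω x)).trans hg
    calc ‖(1 / 2 : ℝ) * (g x + g (reflect a ω x))‖
        ≤ ‖(1 / 2 : ℝ)‖ * (‖g x‖ + ‖g (reflect a ω x)‖) := by
          rw [norm_mul]
          gcongr
          exact norm_add_le _ _
      _ ≤ δ := by
          rw [Real.norm_of_nonneg (by norm_num)]
          linarith
  · simp [reflect_reflect, add_comm]
  · have h₁ : g (ω + (n : ℤ) • a) = d n := by
      rw [hgd ⟨n, by simp; omega⟩]
      congr
      simp
    have h₂ : g (ω + (-1 - n : ℤ) • a) = d n := by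
      rw [hgd ⟨-1 - n, by simp; omega⟩]
      congr
      simp
    simp only [ContinuousMap.smul_apply, ContinuousMap.add_apply, ContinuousMap.comp_apply,
      reflect_add_zsmul, h₁, h₂, smul_eq_mul]
    ring

end Realization

/-! ### The inductive construction -/

section Construction

variable {G : Type*} [TopologicalSpace G] [AddCommGroup G] {a ω : G} {δ ε : ℝ}

/-- The potential that `f` generates along the forward orbit of `ω`. -/
def sample (a ω : G) (f : C(G, ℝ)) (n : ℕ) : ℝ := f (ω + (n : ℤ) • a)

variable [CompactSpace G]

lemma abs_sample_le (f : C(G, ℝ)) (n : ℕ) : |sample a ω f n| ≤ ‖f‖ := f.norm_coe_le_norm _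

variable [IsTopologicalAddGroup G]

/-- The bound on `fracInt` at stage `j`, chosen so that noise of size `δ / 2 ^ (j + 2)` keeps
`fracInt` below `1 / 2 ^ j` with large probability. -/
def fracBound (δ : ℝ) (j : ℕ) : ℝ≥0∞ :=
  ENNReal.ofReal ((1 / 2) ^ j) / (4 * decayConst (δ * (1 / 2) ^ (j + 2)) 4 ^ 2)

/-- The bound on `tailInt` at stage `j`, chosen so that noise of size `δ / 2 ^ (j + 2)` leads to a
`fracInt` below `fracBound δ (j + 1)` with large probability. -/
def tailBound (δ : ℝ) (j : ℕ) : ℝ≥0∞ :=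
  min 1 (fracBound δ (j + 1) / (4 * (decayConst (δ * (1 / 2) ^ (j + 2)) 4 ^ 2 *
    ∑' i, decay (δ * (1 / 2) ^ (j + 2)) 4 i)))

lemma fracBound_ne_zero (hδ : 0 < δ) (j : ℕ) : fracBound δ j ≠ 0 := by
  have := decayConst_ne_top (ε := δ * (1 / 2) ^ (j + 2)) (by positivity) 4
  exact (ENNReal.div_pos (by simp) (by finiteness)).ne'

lemma tailBound_ne_zero (hδ : 0 < δ) (j : ℕ) : tailBound δ j ≠ 0 := by
  have hε : 0 < δ * (1 / 2) ^ (j + 2) := by positivity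
  have := decayConst_ne_top hε 4
  have := tsum_decay_ne_top hε 4
  exact (lt_min one_pos (ENNReal.div_pos (fracBound_ne_zero hδ (j + 1)) (by finiteness))).ne'

lemma tailBound_ne_top (δ : ℝ) (j : ℕ) : tailBound δ j ≠ ∞ :=
  ne_top_of_le_ne_top ENNReal.one_ne_top (min_le_left _ _)

lemma four_mul_mul_fracBound_le (δ : ℝ) (j : ℕ) :
    4 * (decayConst (δ * (1 / 2) ^ (j + 2)) 4 ^ 2 * fracBound δ j) ≤
      ENNReal.ofReal ((1 / 2) ^ j) := by
  rw [← mul_assoc]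
  exact ENNReal.mul_div_le

lemma four_mul_mul_tailBound_le (δ : ℝ) (j : ℕ) :
    4 * (decayConst (δ * (1 / 2) ^ (j + 2)) 4 ^ 2 *
      (∑' i, decay (δ * (1 / 2) ^ (j + 2)) 4 i) * tailBound δ j) ≤ fracBound δ (j + 1) := by
  rw [← mul_assoc]
  exact (mul_le_mul_right (min_le_right _ _) _).trans ENNReal.mul_div_le

/-- A state of the construction after `j` steps: `f` is a symmetric function whose potential has
been fixed up to `n`. The box from `m` to `n` still has to be made negligible by a continuation
beyond `n`, and the bounds say that this is possible by a further small perturbation. -/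
structure IsStage (a ω : G) (δ : ℝ) (j : ℕ) (f : C(G, ℝ)) (m n : ℕ) : Prop where
  symm : ∀ x, f (reflect a ω x) = f x
  norm_le : ‖f‖ ≤ δ * (1 - (1 / 2) ^ (j + 1))
  le : m ≤ n
  lt : j < n
  sum_fracInt_le : ∑ σ ∈ {1, -1}, fracInt σ (sample a ω f) m n n ≤ fracBound δ j
  sum_tailInt_le : ∑ σ ∈ {1, -1}, tailInt σ (sample a ω f) n ≤ tailBound δ j

/-- The relation between consecutive stages `(f, m, n)` and `(g, n, k)` of the construction. The
new cutoff `k` is large enough for polynomials of degree `k` to approximate the fraction of the mass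
that solutions carry between `m` and `n`. -/
structure IsStep (a ω : G) (δ : ℝ) (j : ℕ) (f g : C(G, ℝ)) (m n k : ℕ) : Prop where
  norm_sub_le : ‖g - f‖ ≤ δ * (1 / 2) ^ (j + 2)
  sample_eq : ∀ i < n, sample a ω g i = sample a ω f i
  fracInt_le : ∀ σ : ℝ, σ ^ 2 = 1 →
    fracInt σ (sample a ω g) m n k ≤ ENNReal.ofReal ((1 / 2) ^ j)
  exists_polynomial : ∀ σ : ℝ, σ ^ 2 = 1 → ∃ p : ℝ[X], p.natDegree ≤ k ∧
    ∀ E ∈ Icc (-3 : ℝ) 3, |p.eval E - frac σ (sample a ω f) E m n| ≤ (1 / 2) ^ j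

lemma exists_limit_of_stages (hδ : 0 < δ) {F : ℕ → C(G, ℝ)} {N : ℕ → ℕ}
    (hF : ∀ j, IsStage a ω δ j (F j) (N j) (N (j + 1)) ∧
      IsStep a ω δ j (F j) (F (j + 1)) (N j) (N (j + 1)) (N (j + 2))) :
    ∃ f : C(G, ℝ), ‖f‖ ≤ δ ∧ (∀ x, f (reflect a ω x) = f x) ∧
      ∀ j, ∀ i < N (j + 1), sample a ω f i = sample a ω (F j) i := by
  have hmono : Monotone N := monotone_nat_of_le_succ fun j => (hF j).1.le
  have hcauchy : CauchySeq F := cauchySeq_of_le_geometric (1 / 2) (δ * (1 / 2) ^ 2) (by norm_num)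
    fun j => by
      rw [dist_comm, dist_eq_norm]
      exact (hF j).2.norm_sub_le.trans_eq (by ring)
  obtain ⟨f, hf⟩ := cauchySeq_tendsto_of_complete hcauchy
  have hpt : ∀ x, Filter.Tendsto (fun j => F j x) Filter.atTop (𝓝 (f x)) := fun x =>
    ((ContinuousEvalConst.continuous_eval_const x).tendsto f).comp hf
  refine ⟨f, le_of_tendsto hf.norm (.of_forall fun j => (hF j).1.norm_le.trans ?_), fun x =>
    tendsto_nhds_unique (hpt _) ((hpt x).congr fun j => ((hF j).1.symm x).symm), fun j i hi => ?_⟩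
  · exact mul_le_of_le_one_right hδ.le (sub_le_self _ (by positivity))
  · have hconst : ∀ k ≥ j, sample a ω (F k) i = sample a ω (F j) i := fun k hk => by
      induction k, hk using Nat.le_induction with
      | base => rfl
      | succ k hk ih => rw [(hF k).2.sample_eq i (hi.trans_le (hmono (by omega))), ih]
    refine tendsto_nhds_unique (hpt _) (tendsto_const_nhds.congr' ?_)
    filter_upwards [Filter.eventually_ge_atTop j] with k hk using (hconst k hk).symm

variable [T2Space G]

theorem exists_continuousMap_continuation (ha : ¬ IsOfFinAddOrder a) (hε : 0 < ε)
    (hε2 : ε ≤ 1 / 2) {f : C(G, ℝ)} (hf : ‖f‖ ≤ 1 / 2) (hsymm : ∀ x, f (reflect a ω x) = f x)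
    {m n : ℕ} (hmn : m ≤ n) (S : Finset ℝ) (htail : ∑ σ ∈ S, tailInt σ (sample a ω f) n ≠ ∞)
    {τ₁ τ₂ τ₃ : ℝ≥0∞} (hτ₁ : τ₁ ≠ 0) (hτ₂ : τ₂ ≠ 0) (hτ₃ : τ₃ ≠ 0)
    (h₁ : 4 * (decayConst ε 4 ^ 2 * ∑ σ ∈ S, fracInt σ (sample a ω f) m n n) ≤ τ₁)
    (h₂ : 4 * (decayConst ε 4 ^ 2 * (∑' j, decay ε 4 j) *
      ∑ σ ∈ S, tailInt σ (sample a ω f) n) ≤ τ₂) (L : ℕ) :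
    ∃ (g : C(G, ℝ)) (k : ℕ), n + L ≤ k ∧ ‖g - f‖ ≤ ε ∧ (∀ x, g (reflect a ω x) = g x) ∧
      (∀ i < n, sample a ω g i = sample a ω f i) ∧
      ∑ σ ∈ S, fracInt σ (sample a ω g) m n k ≤ τ₁ ∧
      ∑ σ ∈ S, fracInt σ (sample a ω g) n k k ≤ τ₂ ∧
      ∑ σ ∈ S, tailInt σ (sample a ω g) k ≤ τ₃ := by
  obtain ⟨l, hl, w, hw, hwε, hw₁, hw₂, hw₃⟩ := exists_continuation hε hε2
    (fun n => (abs_sample_le f n).trans hf) hmn S htail hτ₁ hτ₂ hτ₃ h₁ h₂ L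
  have hdiff : ∀ i, |w i - sample a ω f i| ≤ ε := fun i => by
    by_cases hi : i ∈ Finset.Ico n (n + l)
    · exact hwε i hi
    · simp [hw i hi, hε.le]
  obtain ⟨g, hg, hgsymm, hgval⟩ := exists_symmetric_continuousMap ha ω hε.le hdiff (n + l)
  have hval : ∀ i < n + l, sample a ω (f + g) i = w i := fun i hi => by
    rw [sample, ContinuousMap.add_apply, hgval i hi, sample, add_sub_cancel]
  refine ⟨f + g, n + l, by omega, by simpa using hg, fun x => by simp [hsymm, hgsymm],
    fun i hi => ?_, ?_, ?_, ?_⟩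
  · rw [hval i (by omega), hw i (by simp; omega)]
  · simpa only [fracInt_congr hmn (Nat.le_add_right n l) hval] using hw₁
  · simpa only [fracInt_congr (Nat.le_add_right n l) le_rfl hval] using hw₂
  · simpa only [tailInt_congr hval] using hw₃

lemma exists_isStage_zero (ha : ¬ IsOfFinAddOrder a) (ω : G) (hδ : 0 < δ) (hδ2 : δ ≤ 1 / 2) :
    ∃ f n, IsStage a ω δ 0 f n n := by
  obtain ⟨g, k, hk, hg, hgsymm, -, -, -, hgtail⟩ := exists_continuousMap_continuation
    (a := a) (ω := ω) (f := 0) (m := 0) (n := 0) (ε := δ * (1 / 2)) (τ₁ := ∞) (τ₂ := ∞) ha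
    (by positivity) (by linarith) (by simp) (by simp) le_rfl {1, -1}
    (ENNReal.sum_ne_top.2 fun σ _ => tailInt_zero_ne_top σ _) ENNReal.top_ne_zero
    ENNReal.top_ne_zero (tailBound_ne_zero hδ 0) le_top le_top 1
  refine ⟨g, k, hgsymm, ?_, le_rfl, by omega, by simp [fracInt_self], hgtail⟩
  rw [sub_zero] at hg
  linarith

lemma IsStage.exists_step (ha : ¬ IsOfFinAddOrder a) (hδ : 0 < δ) (hδ2 : δ ≤ 1 / 2) {j : ℕ}
    {f : C(G, ℝ)} {m n : ℕ} (h : IsStage a ω δ j f m n) :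
    ∃ g k, IsStage a ω δ (j + 1) g n k ∧ IsStep a ω δ j f g m n k := by
  have hj : (0 : ℝ) < (1 / 2) ^ j := by positivity
  have hε : δ * (1 / 2) ^ (j + 2) ≤ 1 / 2 := by
    have : (1 / 2 : ℝ) ^ (j + 2) ≤ 1 := pow_le_one₀ (by norm_num) (by norm_num)
    nlinarith
  have hf : ‖f‖ ≤ 1 / 2 := h.norm_le.trans (by rw [pow_succ]; nlinarith)
  choose p hp using fun σ : ℝ => exists_polynomial_near_of_continuousOn (-3) 3
    (fun E => frac σ (sample a ω f) E m n) (continuous_frac m n).continuousOn _ hj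
  obtain ⟨g, k, hk, hg, hgsymm, hgf, hg₁, hg₂, hg₃⟩ := exists_continuousMap_continuation ha
    (by positivity) hε hf h.symm h.le {1, -1}
    (ne_top_of_le_ne_top (tailBound_ne_top δ j) h.sum_tailInt_le)
    (by simp) (fracBound_ne_zero hδ (j + 1)) (tailBound_ne_zero hδ (j + 1))
    (le_trans (by gcongr; exact h.sum_fracInt_le) (four_mul_mul_fracBound_le δ j))
    (le_trans (by gcongr; exact h.sum_tailInt_le) (four_mul_mul_tailBound_le δ j))
    (1 + (p 1).natDegree + (p (-1)).natDegree)
  refine ⟨g, k, ⟨hgsymm, ?_, by omega, by have := h.lt; omega, hg₂, hg₃⟩, hg, hgf,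
    fun σ hσ => ?_, fun σ hσ => ⟨p σ, ?_, fun E hE => (hp σ E hE).le⟩⟩
  · calc ‖g‖ ≤ ‖f‖ + ‖g - f‖ := norm_le_norm_add_norm_sub' g f
      _ ≤ δ * (1 - (1 / 2) ^ (j + 1)) + δ * (1 / 2) ^ (j + 2) := add_le_add h.norm_le hg
      _ = δ * (1 - (1 / 2) ^ (j + 1 + 1)) := by ring
  · exact (single_le_sum (f := fun σ => fracInt σ (sample a ω g) m n k) (fun _ _ => zero_le)
      (by simpa using sq_eq_one_iff.1 hσ)).trans hg₁
  · obtain rfl | rfl := sq_eq_one_iff.1 hσ <;> omega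

lemma exists_seq_of_forall_exists {X : Type*} {P : ℕ → X → Prop} {R : ℕ → X → X → Prop}
    (h0 : ∃ x, P 0 x) (hs : ∀ j x, P j x → ∃ y, P (j + 1) y ∧ R j x y) :
    ∃ u : ℕ → X, ∀ j, P j (u j) ∧ R j (u j) (u (j + 1)) := by
  obtain ⟨x₀, hx₀⟩ := h0
  choose next hP hR using hs
  let u : ∀ j, {x // P j x} := fun j =>
    Nat.rec ⟨x₀, hx₀⟩ (fun j x => ⟨next j x x.2, hP j x x.2⟩) j
  exact ⟨fun j => (u j).1, fun j => ⟨(u j).2, hR j (u j).1 (u j).2⟩⟩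

theorem exists_stages (ha : ¬ IsOfFinAddOrder a) (ω : G) (hδ : 0 < δ) (hδ2 : δ ≤ 1 / 2) :
    ∃ (F : ℕ → C(G, ℝ)) (N : ℕ → ℕ), ∀ j, IsStage a ω δ j (F j) (N j) (N (j + 1)) ∧
      IsStep a ω δ j (F j) (F (j + 1)) (N j) (N (j + 1)) (N (j + 2)) := by
  obtain ⟨u, hu⟩ := exists_seq_of_forall_exists
    (P := fun j (x : C(G, ℝ) × ℕ × ℕ) => IsStage a ω δ j x.1 x.2.1 x.2.2)
    (R := fun j x y => y.2.1 = x.2.2 ∧ IsStep a ω δ j x.1 y.1 x.2.1 x.2.2 y.2.2)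
    (by
      obtain ⟨f, n, h⟩ := exists_isStage_zero ha ω hδ hδ2
      exact ⟨(f, n, n), h⟩)
    (fun j x hx => by
      obtain ⟨g, k, hstage, hstep⟩ := hx.exists_step ha hδ hδ2
      exact ⟨(g, x.2.2, k), hstage, rfl, hstep⟩)
  refine ⟨fun j => (u j).1, fun j => (u j).2.1, fun j => ?_⟩
  obtain ⟨hstage, hcut, hstep⟩ := hu j
  obtain ⟨-, hcut', -⟩ := hu (j + 1)
  simp only [hcut', hcut]
  exact ⟨hstage, hstep⟩

theorem exists_norm_le_hasPurePointSpectrum (ha : ¬ IsOfFinAddOrder a) (ω : G) (hδ : 0 < δ)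
    (hδ2 : δ ≤ 1 / 2) :
    ∃ f : C(G, ℝ), ‖f‖ ≤ δ ∧ HasPurePointSpectrum (fun n : ℤ => f (ω + n • a)) := by
  obtain ⟨F, N, hF⟩ := exists_stages ha ω hδ hδ2
  obtain ⟨f, hnorm, hsymm, hval⟩ := exists_limit_of_stages hδ hF
  have hmono : Monotone N := monotone_nat_of_le_succ fun j => (hF j).1.le
  have hN : ∀ j, j ≤ N j
    | 0 => Nat.zero_le _
    | j + 1 => (hF j).1.lt
  refine ⟨f, hnorm, hasPurePointSpectrum_of_fracInt_le
    (fun n => by rw [← reflect_add_zsmul, hsymm])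
    (fun n => (f.norm_coe_le_norm _).trans (by linarith)) hmono hN fun σ hσ j => ⟨?_, ?_⟩⟩
  · change fracInt σ (sample a ω f) _ _ _ ≤ _
    rw [fracInt_congr (hmono j.le_succ) (hmono (j + 1).le_succ) (hval (j + 1))]
    exact (hF j).2.fracInt_le σ hσ
  · obtain ⟨p, hp, hpE⟩ := (hF j).2.exists_polynomial σ hσ
    refine ⟨p, hp, fun E hE => ?_⟩
    change |_ - frac σ (sample a ω f) E _ _| ≤ _
    rw [frac_congr (hmono j.le_succ) (hval j)]
    exact hpE E hE

end Construction

end KunzSouillard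

theorem purePoint_quasiperiodic_small_general {G : Type*} [TopologicalSpace G] [AddCommGroup G]
    [IsTopologicalAddGroup G] [CompactSpace G] [T2Space G] {a : G} (ha : ¬ IsOfFinAddOrder a)
    (ω : G) {ε : ℝ} (hε : 0 < ε) :
    ∃ f : C(G, ℝ), ‖f‖ < ε ∧ HasPurePointSpectrum (fun n : ℤ => f (ω + n • a)) := by
  obtain ⟨f, hf, hspec⟩ := KunzSouillard.exists_norm_le_hasPurePointSpectrum ha ω (δ := min ε 1 / 2)
    (by positivity) (by linarith [min_le_right ε 1])
  exact ⟨f, hf.trans_lt (by linarith [min_le_left ε 1]), hspec⟩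

/-- Given an irrational frequency `α`, any phase `ω`, and `ε > 0`, there is a continuous
`f : 𝕋 → ℝ` with `‖f‖_∞ < ε` such that the Schrödinger operator with the quasi-periodic
potential `V(n) = f(ω + nα)` has pure point spectrum. -/
theorem purePoint_quasiperiodic_small (α : ℝ) (hα : Irrational α) (ω : ℝ)
    (ε : ℝ) (hε : 0 < ε) :
    ∃ f : C(AddCircle (1:ℝ), ℝ), ‖f‖ < ε ∧
      HasPurePointSpectrum (fun n : ℤ => f ((ω + n * α : ℝ) : AddCircle (1:ℝ))) := by
  have hα' : ¬ IsOfFinAddOrder (α : AddCircle (1 : ℝ)) :=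
    AddCircle.not_isOfFinAddOrder_iff_forall_rat_ne_div.2 fun q hq => hα ⟨q, by simpa using hq⟩
  simpa using purePoint_quasiperiodic_small_general hα' (ω : AddCircle (1 : ℝ)) hε
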